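/- arXiv:2303.05395 — 7 statements merged into one kernel-verified Lean document; each statement's English description precedes it below -/
import Mathlib

section
/- For every integer n ≥ 1, the central binomial coefficient satisfies 4^n / √(π(n + 1/2)) ≤ C(2n, n) ≤ 4^n / √(π n), where C(2n,n) denotes the binomial coefficient (2n choose n) and π is the real number pi. -/
open Real

lemma W_mul_choose (n : ℕ) :
    Real.Wallis.W n * ((Nat.choose (2 * n) n : ℝ) ^ 2 * (2 * n + 1)) = ((4 : ℝ) ^ n) ^ 2 := by
  have h := Nat.choose_mul_factorial_mul_factorial (show n ≤ 2 * n by omega)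
  rw [show 2 * n - n = n by omega] at h
  have h' : (Nat.choose (2 * n) n : ℝ) * (n.factorial : ℝ) * (n.factorial : ℝ)
      = ((2 * n).factorial : ℝ) := by exact_mod_cast h
  have hc : (0 : ℝ) < (Nat.choose (2 * n) n : ℝ) := by
    exact_mod_cast Nat.choose_pos (show n ≤ 2 * n by omega)
  have hf : (0 : ℝ) < (n.factorial : ℝ) := by exact_mod_cast n.factorial_pos
  have h4 : (2 : ℝ) ^ (4 * n) = ((4 : ℝ) ^ n) ^ 2 := by
    rw [← pow_mul, mul_comm n 2, pow_mul, pow_mul]; norm_num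
  rw [Real.Wallis.W_eq_factorial_ratio, ← h', h4]
  have : (2 * (n : ℝ) + 1) ≠ 0 := by positivity
  field_simp

/-- For every integer `n ≥ 1`,
`4^n / √(π(n+1/2)) ≤ C(2n,n) ≤ 4^n / √(π n)`. -/
theorem stmt_3 (n : ℕ) (hn : n ≥ 1) :
    (4 : ℝ) ^ n / Real.sqrt (π * ((n : ℝ) + 1 / 2)) ≤ (Nat.choose (2 * n) n : ℝ) ∧
    (Nat.choose (2 * n) n : ℝ) ≤ (4 : ℝ) ^ n / Real.sqrt (π * n) := by
  have hW := W_mul_choose n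
  have h1 := Real.Wallis.W_le n
  have h2 := Real.Wallis.le_W n
  have hn' : (0 : ℝ) < n := by exact_mod_cast hn
  have hpi := Real.pi_pos
  have hc : (0 : ℝ) ≤ (Nat.choose (2 * n) n : ℝ) := Nat.cast_nonneg _
  generalize (Nat.choose (2 * n) n : ℝ) = c at *
  have hK : 0 ≤ c ^ 2 * (2 * (n : ℝ) + 1) := by positivity
  constructor
  · rw [div_le_iff₀ (by positivity)]
    refine (sq_le_sq₀ (by positivity) (by positivity)).1 ?_
    rw [mul_pow, Real.sq_sqrt (by positivity), ← hW]
    refine le_trans (mul_le_mul_of_nonneg_right h1 hK) (le_of_eq ?_)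
    ring
  · rw [le_div_iff₀ (by positivity)]
    refine (sq_le_sq₀ (by positivity) (by positivity)).1 ?_
    rw [mul_pow, Real.sq_sqrt (by positivity), ← hW]
    have h3 : (2 * (n : ℝ)) / (2 * n + 1) * (π / 2) ≤ Real.Wallis.W n := by
      refine le_trans (mul_le_mul_of_nonneg_right ?_ (by positivity)) h2
      rw [div_le_div_iff₀ (by positivity) (by positivity)]
      nlinarith
    refine le_trans (le_of_eq ?_) (mul_le_mul_of_nonneg_right h3 hK)
    field_simp
end

section
/- Let a, b, n be integers with a > b ≥ n ≥ 2. Then k(a, n) > k(b, n), where k(m,n) := (∑_{i=1}^{n} log(1 + m/i)) / log(m+n) and log denotes the natural logarithm. -/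
/-- `k(m,n) = (∑_{i=1}^n log(1 + m/i)) / log(m+n)`. -/
noncomputable def kfun (m n : ℕ) : ℝ :=
  (∑ i ∈ Finset.Icc 1 n, Real.log (1 + (m : ℝ) / (i : ℝ))) / Real.log ((m : ℝ) + n)

/-- For integers `a > b ≥ n ≥ 2`, `k(a,n) > k(b,n)`. -/
theorem stmt_5 (a b n : ℕ) (hab : a > b) (hbn : b ≥ n) (hn : n ≥ 2) :
    kfun a n > kfun b n := by
  unfold kfun
  have hab' : (b : ℝ) < a := by exact_mod_cast hab
  have hn' : (2 : ℝ) ≤ n := by exact_mod_cast hn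
  have hbn' : (n : ℝ) ≤ b := by exact_mod_cast hbn
  have hL : 0 < Real.log ((b : ℝ) + n) := Real.log_pos (by linarith)
  have hLL : Real.log ((b : ℝ) + n) < Real.log ((a : ℝ) + n) :=
    Real.log_lt_log (by linarith) (by linarith)
  have hL' := hL.trans hLL
  rw [Finset.sum_div, Finset.sum_div]
  refine Finset.sum_lt_sum_of_nonempty (Finset.nonempty_Icc.2 (by omega)) ?_
  intro i hi
  obtain ⟨h1, h2⟩ := Finset.mem_Icc.1 hi
  have h1' : (1 : ℝ) ≤ i := by exact_mod_cast h1
  have h2' : (i : ℝ) ≤ n := by exact_mod_cast h2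
  have hi0 : (0 : ℝ) < i := by linarith
  have hA : Real.log (1 + (b : ℝ) / i) < Real.log ((b : ℝ) + n) := by
    apply Real.log_lt_log (by positivity)
    have : (b : ℝ) / i ≤ b := div_le_self (by linarith) h1'
    linarith
  have hD : Real.log (1 + (b : ℝ) / i) + Real.log ((a : ℝ) + n)
      ≤ Real.log (1 + (a : ℝ) / i) + Real.log ((b : ℝ) + n) := by
    rw [← Real.log_mul (by positivity) (by positivity),
      ← Real.log_mul (by positivity) (by positivity)]
    apply Real.log_le_log (by positivity)
    have e : (1 + (a : ℝ) / i) * (b + n) - (1 + (b : ℝ) / i) * (a + n)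
        = (a - b) * (n - i) / i := by
      field_simp
      ring
    have : 0 ≤ ((a : ℝ) - b) * (n - i) / i :=
      div_nonneg (mul_nonneg (by linarith) (by linarith)) hi0.le
    linarith
  rw [div_lt_div_iff₀ hL hL']
  nlinarith [mul_pos (sub_pos.2 hLL) (sub_pos.2 hA), mul_nonneg (sub_nonneg.2 hD) hL.le]
end

section
/- Let C = 1.25506 and E(n) = (n/log n)·(log 4 − C − (log 2 · log 4)/log(2n)) for integers n > 1, where log is the natural logarithm. Suppose n⋆ > 1 and r ≥ 0 are integers with E(n⋆) > r + 1. Then for all integers m ≥ n ≥ n⋆, the product P(m,n) = ∏_{i=1}^{n}(m+i) of n consecutive integers starting at m+1 is divisible by strictly more than r distinct primes, all of which are strictly greater than n. -/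
/-- `E(n) = (n/log n)·(log 4 − C − log 2 · log 4 / log(2n))` with `C = 1.25506`. -/
noncomputable def E (n : ℕ) : ℝ :=
  ((n : ℝ) / Real.log n) *
    (Real.log 4 - 1.25506 - Real.log 2 * Real.log 4 / Real.log (2 * (n : ℝ)))

/-- `P m n = ∏_{i=1}^n (m+i)`. -/
def P (m n : ℕ) : ℕ := ∏ i ∈ Finset.Icc 1 n, (m + i)


/-- The number of primes larger than `n` dividing `P m n`. -/
def bigCount (m n : ℕ) : ℕ := ((P m n).primeFactors.filter (fun p => n < p)).card

lemma P_eq (m n : ℕ) : P m n = n.factorial * (m + n).choose n := by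
  rw [← Nat.ascFactorial_eq_factorial_mul_choose, Nat.ascFactorial_eq_prod_range, P]
  rw [Finset.prod_bij (fun i _ => i - 1)]
  · intro a ha; simp at ha ⊢; omega
  · intro a ha b hb h; simp at ha hb; omega
  · intro b hb; simp at hb; exact ⟨b + 1, by simp; omega, by simp⟩
  · intro a ha; simp at ha; omega

lemma big_card_le (m n : ℕ) :
    (((m + n).choose n).primeFactors.filter (fun p => n < p)).card ≤ bigCount m n := by
  apply Finset.card_le_card
  apply Finset.filter_subset_filter
  rw [P_eq]
  apply Nat.primeFactors_mono (Dvd.intro_left _ rfl)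
  have : 0 < (m + n).choose n := Nat.choose_pos (by omega)
  have := Nat.factorial_pos n
  positivity

lemma choose_split (m n : ℕ) (hn : 0 < n) :
    (m + n).choose n ≤ (m + n) ^ bigCount m n *
      ∏ p ∈ ((m + n).choose n).primeFactors.filter (fun p => ¬ n < p),
        p ^ ((m + n).choose n).factorization p := by
  have hC : (m + n).choose n ≠ 0 := (Nat.choose_pos (by omega)).ne'
  conv_lhs => rw [← Nat.prod_factorization_pow_eq_self hC]
  rw [Finsupp.prod, Nat.support_factorization,
    ← Finset.prod_filter_mul_prod_filter_not _ (fun p => n < p)]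
  gcongr
  refine (Finset.prod_le_pow_card _ _ (m + n) ?_).trans ?_
  · intro p _
    exact Nat.pow_factorization_choose_le (by omega)
  · exact Nat.pow_le_pow_right (by omega) (big_card_le m n)

lemma card_primes_le (S : Finset ℕ) (k : ℕ) (h : ∀ p ∈ S, p.Prime ∧ p ≤ k) :
    S.card ≤ k.primeCounting := by
  rw [Nat.primeCounting, ← Nat.primesBelow_card_eq_primeCounting']
  apply Finset.card_le_card
  intro p hp
  have := h p hp
  rw [Nat.mem_primesBelow]
  exact ⟨by omega, this.1⟩

lemma choose_le_C (m n : ℕ) (hn : 0 < n) :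
    (m + n).choose n ≤ (m + n) ^ bigCount m n * (m + n) ^ n.primeCounting := by
  refine (choose_split m n hn).trans ?_
  gcongr
  refine (Finset.prod_le_pow_card _ _ (m + n) ?_).trans ?_
  · intro p _
    exact Nat.pow_factorization_choose_le (by omega)
  · apply Nat.pow_le_pow_right (by omega)
    apply card_primes_le
    intro p hp
    simp at hp
    exact ⟨hp.1.1, hp.2⟩

lemma choose_le_B (m n B : ℕ) (hn : 0 < n)
    (hB : ∀ p, p.Prime → p ≤ n → (m + n).sqrt < p → p ∣ (m + n).choose n → p ≤ B) :
    (m + n).choose n ≤ (m + n) ^ bigCount m n *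
      ((m + n) ^ (m + n).sqrt.primeCounting * 4 ^ B) := by
  refine (choose_split m n hn).trans ?_
  gcongr
  rw [← Finset.prod_filter_mul_prod_filter_not _ (fun p => p ≤ (m + n).sqrt)]
  gcongr
  · refine (Finset.prod_le_pow_card _ _ (m + n) ?_).trans ?_
    · intro p _
      exact Nat.pow_factorization_choose_le (by omega)
    · apply Nat.pow_le_pow_right (by omega)
      apply card_primes_le
      intro p hp
      simp at hp
      exact ⟨hp.1.1.1, hp.2⟩
  · refine le_trans ?_ (primorial_le_four_pow B)
    rw [primorial]
    refine (Finset.prod_le_prod' (g := fun p => p) ?_).trans ?_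
    · intro p hp
      simp at hp
      have h1 : m + n < p ^ 2 := by
        have := hp.2
        rw [Nat.sqrt_lt'] at this
        exact this
      calc p ^ ((m + n).choose n).factorization p ≤ p ^ 1 :=
            Nat.pow_le_pow_right hp.1.1.1.pos (Nat.factorization_choose_le_one h1)
        _ = p := pow_one p
    · apply Finset.prod_le_prod_of_subset_of_one_le'
      · intro p hp
        simp at hp
        have := hB p hp.1.1.1 hp.1.2 hp.2 hp.1.1.2.1
        simp
        exact ⟨by omega, hp.1.1.1⟩
      · intro p hp _
        simp at hp
        exact hp.2.pos

lemma choose_le_n (m n : ℕ) (hn : 0 < n) :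
    (m + n).choose n ≤ (m + n) ^ bigCount m n *
      ((m + n) ^ (m + n).sqrt.primeCounting * 4 ^ n) :=
  choose_le_B m n n hn (fun _ _ h _ _ => h)

lemma choose_le_third (m n : ℕ) (hn : 2 ≤ n) (hmn : n ≤ m) :
    (m + n).choose n ≤ (m + n) ^ bigCount m n *
      ((m + n) ^ (m + n).sqrt.primeCounting * 4 ^ ((m + n) / 3)) := by
  apply choose_le_B m n _ (by omega)
  intro p hp h1 h2 h3
  by_contra h
  have hp2 : p ≠ 2 := by
    rintro rfl
    rw [Nat.sqrt_lt'] at h2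
    omega
  have := Nat.factorization_choose_of_lt_three_mul (n := m + n) hp2 h1 (by omega) (by omega)
  have h4 := hp.factorization_pos_of_dvd (Nat.choose_pos (by omega)).ne' h3
  omega

lemma choose_lower (m n : ℕ) (hn : 4 ≤ n) (hmn : n ≤ m) :
    (2 * (m + n)) ^ n ≤ n * (n ^ n * (m + n).choose n) := by
  have h1 : (m + n) ^ n * (2 * n).descFactorial n ≤ (2 * n) ^ n * (m + n).descFactorial n := by
    rw [Nat.descFactorial_eq_prod_range, Nat.descFactorial_eq_prod_range]
    have e : ∀ x : ℕ, x ^ n = ∏ i ∈ Finset.range n, x := by simp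
    rw [e, e, ← Finset.prod_mul_distrib, ← Finset.prod_mul_distrib]
    apply Finset.prod_le_prod'
    intro i hi
    simp at hi
    zify [show i ≤ 2 * n by omega, show i ≤ m + n by omega]
    have : (0 : ℤ) ≤ (m - n) * i := mul_nonneg (by omega) (by omega)
    nlinarith
  rw [Nat.descFactorial_eq_factorial_mul_choose, Nat.descFactorial_eq_factorial_mul_choose] at h1
  have h2 : (m + n) ^ n * (2 * n).choose n ≤ (2 * n) ^ n * (m + n).choose n := by
    have := Nat.factorial_pos n
    apply Nat.le_of_mul_le_mul_left _ this
    linarith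
  have h3 := Nat.four_pow_lt_mul_centralBinom n hn
  rw [Nat.centralBinom_eq_two_mul_choose] at h3
  have h4 : 2 ^ n * (2 * (m + n)) ^ n ≤ 2 ^ n * (n * (n ^ n * (m + n).choose n)) := by
    calc 2 ^ n * (2 * (m + n)) ^ n = (m + n) ^ n * 4 ^ n := by
          rw [← mul_pow, ← mul_pow]; congr 1; ring
      _ ≤ (m + n) ^ n * (n * (2 * n).choose n) := by gcongr
      _ = n * ((m + n) ^ n * (2 * n).choose n) := by ring
      _ ≤ n * ((2 * n) ^ n * (m + n).choose n) := by gcongr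
      _ = _ := by rw [mul_pow]; ring
  exact Nat.le_of_mul_le_mul_left h4 (by positivity)

lemma pi_six (x : ℕ) (hx : 6 ≤ x) : (x.primeCounting : ℝ) ≤ x / 3 + 3 := by
  obtain ⟨j, rfl⟩ := Nat.exists_eq_add_of_le hx
  have h := Nat.primeCounting'_add_le (a := 6) (k := 7) (by norm_num) (by norm_num) j
  have e1 : Nat.primeCounting' 7 = 3 := by decide
  have e2 : Nat.totient 6 = 2 := by decide
  rw [e1, e2] at h
  have h' : 3 * (6 + j).primeCounting ≤ (6 + j) + 9 := by
    rw [Nat.primeCounting, show 6 + j + 1 = 7 + j by ring]; omega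
  have : (3 : ℝ) * (6 + j).primeCounting ≤ ((6 + j : ℕ) : ℝ) + 9 := by exact_mod_cast h'
  linarith

lemma pi_thirty (x : ℕ) (hx : 30 ≤ x) : (x.primeCounting : ℝ) ≤ 4 * x / 15 + 10 := by
  obtain ⟨j, rfl⟩ := Nat.exists_eq_add_of_le hx
  have h := Nat.primeCounting'_add_le (a := 30) (k := 31) (by norm_num) (by norm_num) j
  have e1 : Nat.primeCounting' 31 = 10 := by decide
  have e2 : Nat.totient 30 = 8 := by decide
  rw [e1, e2] at h
  have h' : 15 * (30 + j).primeCounting ≤ 4 * (30 + j) + 150 := by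
    rw [Nat.primeCounting, show 30 + j + 1 = 31 + j by ring]; omega
  have : (15 : ℝ) * (30 + j).primeCounting ≤ 4 * ((30 + j : ℕ) : ℝ) + 150 := by exact_mod_cast h'
  linarith

lemma E_le (n r : ℕ) (hn : n > 1) (hE : E n > (r : ℝ) + 1) :
    1024 < n ∧ (r : ℝ) < 0.13124 * n / Real.log n := by
  have l1 := Real.log_two_gt_d9
  have l2 := Real.log_two_lt_d9
  have h4 : Real.log 4 = 2 * Real.log 2 := by
    rw [show (4 : ℝ) = 2 ^ 2 by norm_num, Real.log_pow]; norm_num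
  have hn1 : (1 : ℝ) < n := by exact_mod_cast hn
  have hn0 : (0 : ℝ) < n := by linarith
  have hL : 0 < Real.log n := Real.log_pos hn1
  have hr : (0 : ℝ) ≤ r := Nat.cast_nonneg r
  unfold E at hE
  rw [Real.log_mul (by norm_num) hn0.ne', h4] at hE
  set L := Real.log n with hLdef
  set t := Real.log 2 with ht
  have hq : 0 < (n : ℝ) / L := by positivity
  set d := t * (2 * t) / (t + L) with hd
  have hdp : 0 < d := by positivity
  have hpar : 0 < 2 * t - 1.25506 - d := by
    by_contra h
    have : (n : ℝ) / L * (2 * t - 1.25506 - d) ≤ 0 :=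
      mul_nonpos_of_nonneg_of_nonpos hq.le (by linarith)
    linarith
  refine ⟨?_, ?_⟩
  · by_contra hle
    push Not at hle
    have hle' : (n : ℝ) ≤ 1024 := by exact_mod_cast hle
    have hLu : L ≤ 10 * t := by
      have := Real.log_le_log hn0 hle'
      rw [show (1024 : ℝ) = 2 ^ 10 by norm_num, Real.log_pow] at this
      simpa using this
    have hd1 : d * (t + L) = t * (2 * t) := by
      rw [hd]; field_simp
    have hdl : 2 * t / 11 ≤ d := by
      rw [hd, div_le_div_iff₀ (by norm_num) (by positivity)]
      nlinarith
    have hL6 : 6.6 < L := by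
      nlinarith
    have hq2 : (n : ℝ) / L ≤ 1024 / 6.6 := by
      gcongr
    have : (n : ℝ) / L * (2 * t - 1.25506 - d) ≤ 1024 / 6.6 * 0.0054 := by
      apply mul_le_mul hq2 (by linarith) hpar.le (by norm_num)
    norm_num at this
    linarith
  · have : (n : ℝ) / L * (2 * t - 1.25506 - d) ≤ (n : ℝ) / L * 0.13124 := by
      apply mul_le_mul_of_nonneg_left _ hq.le
      linarith
    have e : 0.13124 * n / L = (n : ℝ) / L * 0.13124 := by ring
    rw [e]; linarith

lemma log_sqrt_bound (x : ℝ) (hx : 1024 ≤ x) : Real.log x ≤ 0.21662 * √x := by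
  have h := Real.log_div_sqrt_antitoneOn (a := 1024) (b := x)
  have he : Real.exp 2 ≤ 1024 := by
    have := Real.exp_one_lt_d9
    have e : Real.exp 2 = Real.exp 1 ^ 2 := by rw [← Real.exp_nat_mul]; norm_num
    have := Real.exp_pos 1
    rw [e]; nlinarith
  have h := h he (he.trans hx) hx
  have l2 := Real.log_two_lt_d9
  have e1 : Real.log 1024 = 10 * Real.log 2 := by
    rw [show (1024 : ℝ) = 2 ^ 10 by norm_num, Real.log_pow]; norm_num
  have e2 : √(1024 : ℝ) = 32 := by
    rw [show (1024 : ℝ) = 32 ^ 2 by norm_num]; exact Real.sqrt_sq (by norm_num)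
  simp only [e1, e2] at h
  have hs : 0 < √x := Real.sqrt_pos.mpr (by linarith)
  rw [div_le_iff₀ hs] at h
  refine h.trans ?_
  gcongr
  linarith

lemma log_fourth_bound (x : ℝ) (hx : 1024 ≤ x) : Real.log x ≤ 1.2256 * √(√x) := by
  have hx0 : 0 < x := by linarith
  set u := √(√x) with hu
  have hsx : 0 < √x := Real.sqrt_pos.mpr hx0
  have hu0 : 0 < u := Real.sqrt_pos.mpr hsx
  have hu2 : u ^ 2 = √x := Real.sq_sqrt hsx.le
  have hs32 : 32 ≤ √x := by
    apply Real.le_sqrt_of_sq_le; norm_num; exact hx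
  have hu4 : u ^ 4 = x := by
    rw [show u ^ 4 = (u ^ 2) ^ 2 by ring, hu2]; exact Real.sq_sqrt hx0.le
  have hl : Real.log x = 2 * Real.log (u ^ 2) := by
    rw [← hu4, Real.log_pow, Real.log_pow]; push_cast; ring
  -- with v = u^2 ≥ 32 : log v = 5 log 2 + 2 log (u / √32)
  have l2 := Real.log_two_lt_d9
  have h32 : Real.log 32 = 5 * Real.log 2 := by
    rw [show (32 : ℝ) = 2 ^ 5 by norm_num, Real.log_pow]; norm_num
  set w := √(32 : ℝ) with hw
  have hw2 : w ^ 2 = 32 := Real.sq_sqrt (by norm_num)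
  have hw0 : 0 < w := Real.sqrt_pos.mpr (by norm_num)
  have hlw : 2 * Real.log w = 5 * Real.log 2 := by
    rw [← h32, ← hw2, Real.log_pow]; norm_num
  have hwl : 5.6568 < w := by
    rw [hw]; apply Real.lt_sqrt_of_sq_lt; norm_num
  have huw : w ≤ u := by
    apply Real.sqrt_le_sqrt hs32
  have hlog := Real.log_le_sub_one_of_pos (div_pos hu0 hw0)
  rw [Real.log_div hu0.ne' hw0.ne'] at hlog
  rw [hl, Real.log_pow]
  push_cast
  have hz1 : 1 ≤ u / w := by rw [le_div_iff₀ hw0]; linarith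
  have hz : u / w * w = u := by field_simp
  set z := u / w
  have : 4 * Real.log u ≤ 4 * (1.73287 * z) := by linarith
  have : 1.2256 * u ≥ 1.2256 * (5.6568 * z) := by nlinarith
  linarith

lemma generic (x y s h L l ρ κ : ℝ) (hx : 1024 ≤ x) (hs : 0 ≤ s) (hL : 0 < L)
    (hLx : L ≤ 0.00677 * x) (hl : l ≤ ρ * L) (hρ : 0 < ρ) (hκ : √y * L ≤ κ * x)
    (hh : ρ * 0.13124 + ρ * κ / 3 + (3 * ρ + 1) * 0.00677 ≤ h)
    (hm : x * h ≤ L + (s + (√y / 3 + 3)) * l) : 0.13124 * x / L ≤ s := by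
  rw [div_le_iff₀ hL]
  by_contra hc
  push Not at hc
  have hy := Real.sqrt_nonneg y
  have h1 : (s + (√y / 3 + 3)) * l ≤ (s + (√y / 3 + 3)) * (ρ * L) := by
    gcongr
  have h2 : (s + (√y / 3 + 3)) * (ρ * L) = ρ * (s * L) + ρ / 3 * (√y * L) + 3 * ρ * L := by ring
  have h3 : ρ / 3 * (√y * L) ≤ ρ / 3 * (κ * x) := by gcongr
  have h4 : 3 * ρ * L ≤ 3 * ρ * (0.00677 * x) := by gcongr
  have h5 : x * (ρ * 0.13124 + ρ * κ / 3 + (3 * ρ + 1) * 0.00677) ≤ x * h := by gcongr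
  have h6 : ρ * (s * L) < ρ * (0.13124 * x) := by gcongr
  nlinarith

lemma log_chord (K t : ℝ) (ht : t = Real.log 2) (h2 : 2 ≤ K) (h3 : K ≤ 3)
    (hl3 : 19 / 12 * t ≤ Real.log 3) (l1 : 0.6931471803 < t) :
    0.404 ≤ t + Real.log K - 2 / 3 * t * K := by
  have hc : ConcaveOn ℝ (Set.Ioi 0) Real.log := strictConcaveOn_log_Ioi.concaveOn
  have h := hc.2 (show (2 : ℝ) ∈ Set.Ioi 0 by simp) (show (3 : ℝ) ∈ Set.Ioi 0 by simp)
    (show 0 ≤ 3 - K by linarith) (show 0 ≤ K - 2 by linarith) (by ring)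
  simp only [smul_eq_mul] at h
  rw [show (3 - K) * 2 + (K - 2) * 3 = K by ring, ← ht] at h
  have h5 : (K - 2) * (19 / 12 * t) ≤ (K - 2) * Real.log 3 :=
    mul_le_mul_of_nonneg_left hl3 (by linarith)
  have h6 : 0 ≤ (3 - K) * t := mul_nonneg (by linarith) (by linarith)
  nlinarith

set_option maxHeartbeats 1000000 in
lemma main_bound (m n : ℕ) (hn : 1024 < n) (hmn : n ≤ m) :
    0.13124 * (n : ℝ) / Real.log n ≤ bigCount m n := by
  have l1 := Real.log_two_gt_d9
  have l2 := Real.log_two_lt_d9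
  have h4 : Real.log 4 = 2 * Real.log 2 := by
    rw [show (4 : ℝ) = 2 ^ 2 by norm_num, Real.log_pow]; norm_num
  have hx : (1024 : ℝ) ≤ n := by exact_mod_cast hn.le
  have hx0 : (0 : ℝ) < n := by linarith
  have hC0 : 0 < (m + n).choose n := Nat.choose_pos (by omega)
  have hC0' : (0 : ℝ) < (m + n).choose n := by exact_mod_cast hC0
  have hxy : 2 * (n : ℝ) ≤ ((m + n : ℕ) : ℝ) := by
    have : 2 * n ≤ m + n := by omega
    exact_mod_cast this
  have hy0 : (0 : ℝ) < ((m + n : ℕ) : ℝ) := by linarith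
  have hlow : ((2 * (m + n : ℕ) : ℝ)) ^ n ≤ n * ((n : ℝ) ^ n * (m + n).choose n) := by
    exact_mod_cast choose_lower m n (by omega) hmn
  have hupn : (((m + n).choose n : ℕ) : ℝ) ≤ ((m + n : ℕ) : ℝ) ^ bigCount m n *
      (((m + n : ℕ) : ℝ) ^ (m + n).sqrt.primeCounting * 4 ^ n) := by
    exact_mod_cast choose_le_n m n (by omega)
  have hup3 : (((m + n).choose n : ℕ) : ℝ) ≤ ((m + n : ℕ) : ℝ) ^ bigCount m n *
      (((m + n : ℕ) : ℝ) ^ (m + n).sqrt.primeCounting * 4 ^ ((m + n) / 3)) := by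
    exact_mod_cast choose_le_third m n (by omega) hmn
  have hupC : (((m + n).choose n : ℕ) : ℝ) ≤ ((m + n : ℕ) : ℝ) ^ bigCount m n *
      ((m + n : ℕ) : ℝ) ^ n.primeCounting := by
    exact_mod_cast choose_le_C m n (by omega)
  have hthird : (((m + n) / 3 : ℕ) : ℝ) ≤ ((m + n : ℕ) : ℝ) / 3 := Nat.cast_div_le
  have hpi : ((m + n).sqrt.primeCounting : ℝ) ≤ √((m + n : ℕ) : ℝ) / 3 + 3 := by
    have a := pi_six (m + n).sqrt (by rw [Nat.le_sqrt']; omega)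
    have b := Real.nat_sqrt_le_real_sqrt (a := m + n)
    linarith
  have hpin := pi_thirty n (by omega)
  have hs : (0 : ℝ) ≤ bigCount m n := Nat.cast_nonneg _
  generalize (bigCount m n) = s at *
  generalize ((m + n).choose n) = C at *
  generalize (m + n).sqrt.primeCounting = q at *
  generalize n.primeCounting = qn at *
  generalize (m + n) / 3 = B at *
  generalize ((m + n : ℕ) : ℝ) = y at *
  have hLl := Real.log_le_log (by norm_num) hx
  rw [show (1024 : ℝ) = 2 ^ 10 by norm_num, Real.log_pow] at hLl
  push_cast at hLl
  have hlow' := Real.log_le_log (by positivity) hlow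
  rw [Real.log_pow, Real.log_mul (by norm_num) hy0.ne', Real.log_mul hx0.ne' (by positivity),
    Real.log_mul (by positivity) hC0'.ne', Real.log_pow] at hlow'
  have hupn' := Real.log_le_log hC0' hupn
  rw [Real.log_mul (by positivity) (by positivity), Real.log_mul (by positivity) (by positivity),
    Real.log_pow, Real.log_pow, Real.log_pow, h4] at hupn'
  have hup3' := Real.log_le_log hC0' hup3
  rw [Real.log_mul (by positivity) (by positivity), Real.log_mul (by positivity) (by positivity),
    Real.log_pow, Real.log_pow, Real.log_pow, h4] at hup3'
  have hupC' := Real.log_le_log hC0' hupC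
  rw [Real.log_mul (by positivity) (by positivity), Real.log_pow, Real.log_pow] at hupC'
  have hKdef : Real.log y = Real.log n + Real.log (y / n) := by
    rw [Real.log_div hy0.ne' hx0.ne']; ring
  have hb1 := log_sqrt_bound n hx
  have hb2 := log_fourth_bound n hx
  have hK2 : 2 ≤ y / n := by rw [le_div_iff₀ hx0]; linarith
  have hKy : y / n * n = y := by field_simp
  have hsq : √(n : ℝ) ^ 2 = n := Real.sq_sqrt hx0.le
  have hs32 : 32 ≤ √(n : ℝ) := by
    apply Real.le_sqrt_of_sq_le; norm_num; exact_mod_cast hn.le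
  have hLx : Real.log n ≤ 0.00677 * n := by nlinarith
  have hl3 : 19 / 12 * Real.log 2 ≤ Real.log 3 := by
    have : Real.log ((2 : ℝ) ^ 19) ≤ Real.log ((3 : ℝ) ^ 12) :=
      Real.log_le_log (by norm_num) (by norm_num)
    rw [Real.log_pow, Real.log_pow] at this
    push_cast at this
    linarith
  have h8 : Real.log 8 = 3 * Real.log 2 := by
    rw [show (8 : ℝ) = 2 ^ 3 by norm_num, Real.log_pow]; norm_num
  set K := y / n with hK
  set t := Real.log 2 with ht
  set L := Real.log n with hL
  set l := Real.log y with hl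
  set k := Real.log K with hk
  have hk2 : t ≤ k := Real.log_le_log (by norm_num) hK2
  have hl0 : 0 < l := by linarith
  have hL0 : 0 < L := by linarith
  have hql : (q : ℝ) * l ≤ (√y / 3 + 3) * l := by gcongr
  have hcase3 : (n : ℝ) * (k - t) ≤ L + (s + (√y / 3 + 3)) * l := by
    have : (n : ℝ) * (t + l) = n * t + n * L + n * k := by rw [hKdef]; ring
    linarith
  rcases le_total K 4 with hK4 | hK4
  · have hk4 : k ≤ 2 * t := by rw [← h4]; exact Real.log_le_log (by linarith) hK4
    have hsy : √y ≤ 2 * √(n : ℝ) := by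
      apply Real.sqrt_le_iff.mpr
      refine ⟨by positivity, ?_⟩
      rw [mul_pow, hsq, ← hKy]; nlinarith
    have hκ : √y * L ≤ 0.43324 * n := by
      calc √y * L ≤ (2 * √(n : ℝ)) * (0.21662 * √(n : ℝ)) := by gcongr
        _ = 0.43324 * √(n : ℝ) ^ 2 := by ring
        _ = _ := by rw [hsq]
    apply generic n y s 0.404 L l 1.2 0.43324 hx hs hL0 hLx (by linarith) (by norm_num) hκ
      (by norm_num)
    rcases le_total K 3 with hK3 | hK3
    · have hBt : (B : ℝ) * (2 * t) ≤ y / 3 * (2 * t) := by gcongr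
      have hh : 0.404 ≤ t + k - 2 / 3 * t * K := log_chord K t ht hK2 hK3 hl3 l1
      have h1 : (n : ℝ) * 0.404 ≤ n * (t + k - 2 / 3 * t * K) := by gcongr
      have h2 : (n : ℝ) * (t + k - 2 / 3 * t * K) = n * (t + l) - n * L - y / 3 * (2 * t) := by
        rw [hKdef, ← hKy]; ring
      linarith
    · have hk3 : Real.log 3 ≤ k := Real.log_le_log (by norm_num) hK3
      have h1 : (n : ℝ) * 0.404 ≤ n * (k - t) := by gcongr; linarith
      linarith
  · have hk4 : 2 * t ≤ k := by rw [← h4]; exact Real.log_le_log (by norm_num) hK4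
    rcases le_total K 8 with hK8 | hK8
    · have hk8 : k ≤ 3 * t := by rw [← h8]; exact Real.log_le_log (by linarith) hK8
      have hsy : √y ≤ 3 * √(n : ℝ) := by
        apply Real.sqrt_le_iff.mpr
        refine ⟨by positivity, ?_⟩
        rw [mul_pow, hsq, ← hKy]; nlinarith
      have hκ : √y * L ≤ 0.64986 * n := by
        calc √y * L ≤ (3 * √(n : ℝ)) * (0.21662 * √(n : ℝ)) := by gcongr
          _ = 0.64986 * √(n : ℝ) ^ 2 := by ring
          _ = _ := by rw [hsq]
      apply generic n y s 0.693 L l 1.3 0.64986 hx hs hL0 hLx (by linarith) (by norm_num) hκ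
        (by norm_num)
      have h1 : (n : ℝ) * 0.693 ≤ n * (k - t) := by gcongr; linarith
      linarith
    · have hk8 : 3 * t ≤ k := by rw [← h8]; exact Real.log_le_log (by norm_num) hK8
      rcases le_total (y ^ 2) ((n : ℝ) ^ 3) with hyn | hyn
      · have hl15 : l ≤ 1.5 * L := by
          have := Real.log_le_log (by positivity) hyn
          rw [Real.log_pow, Real.log_pow] at this
          push_cast at this
          linarith
        set u := √(√(n : ℝ)) with hu
        have hu0 : 0 ≤ u := Real.sqrt_nonneg _
        have hu4 : u ^ 4 = n := by
          rw [show u ^ 4 = (u ^ 2) ^ 2 by ring, hu, Real.sq_sqrt (Real.sqrt_nonneg _), hsq]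
        have hsy : √y ≤ u ^ 3 := by
          apply Real.sqrt_le_iff.mpr
          refine ⟨by positivity, ?_⟩
          apply le_of_sq_le_sq _ (by positivity)
          rw [← hu4] at hyn
          calc y ^ 2 ≤ _ := hyn
            _ = _ := by ring
        have hκ : √y * L ≤ 1.2256 * n := by
          calc √y * L ≤ u ^ 3 * (1.2256 * u) := by gcongr
            _ = 1.2256 * u ^ 4 := by ring
            _ = _ := by rw [hu4]
        apply generic n y s 1.386 L l 1.5 1.2256 hx hs hL0 hLx (by linarith) (by norm_num) hκ
          (by norm_num)
        have h1 : (n : ℝ) * 1.386 ≤ n * (k - t) := by gcongr; linarith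
        linarith
      · have hl15 : 3 * L ≤ 2 * l := by
          have := Real.log_le_log (by positivity) hyn
          rw [Real.log_pow, Real.log_pow] at this
          push_cast at this
          linarith
        have h1 : (n : ℝ) * L ≤ n * (2 / 3 * l) := by gcongr; linarith
        have h2 : L ≤ n * t := by nlinarith
        have h3 : (qn : ℝ) * l ≤ (4 * n / 15 + 10) * l := by gcongr
        have h5 : (n / 3 : ℝ) * l ≤ (s + (4 * n / 15 + 10)) * l := by linarith
        have h6 := le_of_mul_le_mul_right h5 hl0
        have h7 : 0.13124 * (n : ℝ) / L ≤ 0.02 * n := by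
          rw [div_le_iff₀ hL0]; nlinarith
        linarith

/-- If `n⋆ > 1` and `r ≥ 0` are integers with `E(n⋆) > r + 1`, then for all
`m ≥ n ≥ n⋆`, `P(m,n)` is divisible by strictly more than `r` distinct primes,
all strictly greater than `n`. -/
theorem stmt_10 (nstar r : ℕ) (hstar : nstar > 1) (hE : E nstar > (r : ℝ) + 1) :
    ∀ m n : ℕ, m ≥ n → n ≥ nstar →
      ((P m n).primeFactors.filter (fun p => n < p)).card > r := by
  intro m n hmn hn
  obtain ⟨h1, h2⟩ := E_le nstar r hstar hE
  have h3 := main_bound m n (by omega) hmn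
  change bigCount m n > r
  have h4 : 0.13124 * (nstar : ℝ) / Real.log nstar ≤ 0.13124 * n / Real.log n := by
    have he : Real.exp 1 ≤ nstar := by
      have a := Real.exp_one_lt_d9
      have b : (1024 : ℝ) < nstar := by exact_mod_cast h1
      linarith
    have hns : (nstar : ℝ) ≤ n := by exact_mod_cast hn
    have h := Real.log_div_self_antitoneOn (a := (nstar : ℝ)) (b := n) he (he.trans hns) hns
    simp only at h
    have hp0 : (1 : ℝ) < nstar := by exact_mod_cast hstar
    have hl1 : 0 < Real.log nstar := Real.log_pos hp0
    have hl2 : 0 < Real.log n := Real.log_pos (by linarith)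
    rw [div_le_div_iff₀ (by linarith) (by linarith)] at h
    rw [div_le_div_iff₀ hl1 hl2]
    linarith
  have h5 : (r : ℝ) < bigCount m n := by linarith
  exact_mod_cast h5
end

section
/- For all integers m ≥ n ≥ 6, the product P(m,n) = ∏_{i=1}^{n}(m+i) of n consecutive integers each strictly greater than n is divisible by at least two distinct primes strictly greater than n. -/
namespace Syl

open Finset

lemma P_ne_zero (m n : ℕ) : P m n ≠ 0 := by
  unfold P
  refine Finset.prod_ne_zero_iff.mpr fun i hi => ?_
  have := (Finset.mem_Icc.mp hi).1
  omega

/-- Primes greater than `n` dividing the product. -/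
def big (m n : ℕ) : Finset ℕ := (P m n).primeFactors.filter (fun p => n < p)

lemma mem_big {m n p i : ℕ} (hp : p.Prime) (hn : n < p) (hi : 1 ≤ i) (hi' : i ≤ n)
    (h : p ∣ m + i) : p ∈ big m n := by
  unfold big
  rw [Finset.mem_filter, Nat.mem_primeFactors]
  refine ⟨⟨hp, ?_, P_ne_zero m n⟩, hn⟩
  exact h.trans (Finset.dvd_prod_of_mem (fun i => m + i) (Finset.mem_Icc.mpr ⟨hi, hi'⟩))

lemma two_le_of_two {m n p q : ℕ} (hp : p ∈ big m n) (hq : q ∈ big m n) (h : p ≠ q) :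
    2 ≤ (big m n).card := by
  have : ({p, q} : Finset ℕ) ⊆ big m n := by
    intro x hx
    simp only [Finset.mem_insert, Finset.mem_singleton] at hx
    rcases hx with rfl | rfl <;> assumption
  have h2 := Finset.card_le_card this
  rwa [Finset.card_pair h] at h2

lemma P_eq (m n : ℕ) : P m n = n.factorial * (m + n).choose n := by
  rw [← Nat.ascFactorial_eq_factorial_mul_choose, Nat.ascFactorial_eq_prod_range]
  unfold P
  have hs : Finset.Icc 1 n = Finset.Ico 1 (n + 1) := by
    ext i
    simp only [Finset.mem_Icc, Finset.mem_Ico]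
    omega
  rw [hs, Finset.prod_Ico_eq_prod_range, Nat.add_sub_cancel]
  exact Finset.prod_congr rfl fun i _ => by ring

lemma prod_dist (n j : ℕ) (h1 : 1 ≤ j) (h2 : j ≤ n) :
    ∏ i ∈ (Finset.Icc 1 n).erase j, Nat.dist i j = (j - 1).factorial * (n - j).factorial := by
  have hs : (Finset.Icc 1 n).erase j = Finset.Ico 1 j ∪ Finset.Ico (j + 1) (n + 1) := by
    ext i
    simp only [Finset.mem_erase, Finset.mem_Icc, Finset.mem_union, Finset.mem_Ico]
    omega
  rw [hs, Finset.prod_union]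
  · congr 1
    · rw [← Finset.prod_range_add_one_eq_factorial, ← Finset.prod_range_reflect,
        Finset.prod_Ico_eq_prod_range]
      refine Finset.prod_congr rfl fun i hi => ?_
      have := Finset.mem_range.mp hi
      rw [Nat.dist_eq_sub_of_le (by omega)]
      omega
    · rw [← Finset.prod_range_add_one_eq_factorial, Finset.prod_Ico_eq_prod_range]
      have : n + 1 - (j + 1) = n - j := by omega
      rw [this]
      refine Finset.prod_congr rfl fun i hi => ?_
      rw [Nat.dist_eq_sub_of_le_right (by omega)]
      omega
  · rw [Finset.disjoint_left]
    intro a ha hb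
    simp only [Finset.mem_Ico] at ha hb
    omega

/-- The Sylvester–Erdős removal argument. -/
lemma removal (m n : ℕ) (hn : 1 ≤ n) :
    (m + 1) ^ (n - (P m n).primeFactors.card) ≤ (n - 1).factorial := by
  classical
  have hne : (Finset.Icc 1 n).Nonempty := ⟨1, Finset.mem_Icc.mpr ⟨le_rfl, hn⟩⟩
  have hex : ∀ q : ℕ, ∃ j ∈ Finset.Icc 1 n, ∀ i ∈ Finset.Icc 1 n,
      (m + i).factorization q ≤ (m + j).factorization q := fun q =>
    Finset.exists_max_image (Finset.Icc 1 n) (fun i => (m + i).factorization q) hne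
  choose f hf hmax using hex
  set T := Finset.Icc 1 n \ (P m n).primeFactors.image f with hT
  have hTc : n - (P m n).primeFactors.card ≤ T.card := by
    have h1 := Finset.le_card_sdiff ((P m n).primeFactors.image f) (Finset.Icc 1 n)
    have h2 : ((P m n).primeFactors.image f).card ≤ (P m n).primeFactors.card :=
      Finset.card_image_le
    rw [Nat.card_Icc, ← hT] at h1
    omega
  have hTpos : ∀ i ∈ T, m + i ≠ 0 := by
    intro i hi
    have := (Finset.mem_Icc.mp (Finset.mem_sdiff.mp hi).1).1
    omega
  have hdvd : ∏ i ∈ T, (m + i) ∣ (n - 1).factorial := by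
    rw [← Nat.factorization_le_iff_dvd (Finset.prod_ne_zero_iff.mpr hTpos)
      (Nat.factorial_ne_zero _)]
    intro q
    by_cases hq : q ∈ (P m n).primeFactors
    · have hqp := Nat.prime_of_mem_primeFactors hq
      have hfq := Finset.mem_Icc.mp (hf q)
      have hTe : T ⊆ (Finset.Icc 1 n).erase (f q) := by
        intro i hi
        rw [hT, Finset.mem_sdiff] at hi
        refine Finset.mem_erase.mpr ⟨?_, hi.1⟩
        rintro rfl
        exact hi.2 (Finset.mem_image_of_mem f hq)
      have hd0 : ∀ i ∈ (Finset.Icc 1 n).erase (f q), Nat.dist i (f q) ≠ 0 := by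
        intro i hi h0
        exact (Finset.mem_erase.mp hi).1 (Nat.eq_of_dist_eq_zero h0)
      have key : ∀ i ∈ (Finset.Icc 1 n).erase (f q),
          (m + i).factorization q ≤ (Nat.dist i (f q)).factorization q := by
        intro i hi
        have hi' := (Finset.mem_erase.mp hi).2
        rw [← hqp.pow_dvd_iff_le_factorization (hd0 i hi)]
        have ha : q ^ (m + i).factorization q ∣ m + i := Nat.ordProj_dvd _ _
        have hb : q ^ (m + i).factorization q ∣ m + f q :=
          (pow_dvd_pow q (hmax q i hi')).trans (Nat.ordProj_dvd _ _)
        rcases le_total i (f q) with h | h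
        · rw [Nat.dist_eq_sub_of_le h]
          have := Nat.dvd_sub hb ha
          rwa [Nat.add_sub_add_left] at this
        · rw [Nat.dist_eq_sub_of_le_right h]
          have := Nat.dvd_sub ha hb
          rwa [Nat.add_sub_add_left] at this
      calc (∏ i ∈ T, (m + i)).factorization q
          = ∑ i ∈ T, (m + i).factorization q := by
            rw [Nat.factorization_prod hTpos, Finset.sum_apply']
        _ ≤ ∑ i ∈ (Finset.Icc 1 n).erase (f q), (m + i).factorization q :=
            Finset.sum_le_sum_of_subset hTe
        _ ≤ ∑ i ∈ (Finset.Icc 1 n).erase (f q), (Nat.dist i (f q)).factorization q :=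
            Finset.sum_le_sum key
        _ = (∏ i ∈ (Finset.Icc 1 n).erase (f q), Nat.dist i (f q)).factorization q := by
            rw [Nat.factorization_prod hd0, Finset.sum_apply']
        _ ≤ (n - 1).factorial.factorization q := by
            rw [prod_dist n (f q) hfq.1 hfq.2]
            have hdv : (f q - 1).factorial * (n - f q).factorial ∣ (n - 1).factorial := by
              have := Nat.factorial_mul_factorial_dvd_factorial (n := n - 1) (k := f q - 1)
                (by omega)
              have e : n - 1 - (f q - 1) = n - f q := by omega
              rwa [e] at this
            exact (Nat.factorization_le_iff_dvd
              (mul_ne_zero (Nat.factorial_ne_zero _) (Nat.factorial_ne_zero _))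
              (Nat.factorial_ne_zero _)).mpr hdv q
    · have : (∏ i ∈ T, (m + i)).factorization q = 0 := by
        have hd : ∏ i ∈ T, (m + i) ∣ P m n :=
          Finset.prod_dvd_prod_of_subset _ _ _ Finset.sdiff_subset
        have := (Nat.factorization_le_iff_dvd (Finset.prod_ne_zero_iff.mpr hTpos)
          (P_ne_zero m n)).mpr hd q
        have h0 : (P m n).factorization q = 0 := by
          rwa [← Finsupp.notMem_support_iff, Nat.support_factorization]
        omega
      rw [this]
      exact Nat.zero_le _
  calc (m + 1) ^ (n - (P m n).primeFactors.card) ≤ (m + 1) ^ T.card :=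
        Nat.pow_le_pow_right (by omega) hTc
    _ = ∏ i ∈ T, (m + 1) := by rw [Finset.prod_const]
    _ ≤ ∏ i ∈ T, (m + i) := by
        refine Finset.prod_le_prod' fun i hi => ?_
        have := (Finset.mem_Icc.mp (Finset.mem_sdiff.mp hi).1).1
        omega
    _ ≤ (n - 1).factorial := Nat.le_of_dvd (Nat.factorial_pos _) hdvd

lemma primeFactors_card (m n : ℕ) (h : (big m n).card ≤ 1) :
    (P m n).primeFactors.card ≤ n.primeCounting + 1 := by
  have h1 := Finset.card_filter_add_card_filter_not (s := (P m n).primeFactors) (fun p => n < p)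
  have h2 : ((P m n).primeFactors.filter (fun p => ¬ n < p)).card ≤ n.primeCounting := by
    rw [← Nat.primesLE_card_eq_primeCounting]
    refine Finset.card_le_card fun p hp => ?_
    rw [Finset.mem_filter] at hp
    exact Nat.mem_primesLE.mpr ⟨not_lt.mp hp.2, Nat.prime_of_mem_primeFactors hp.1⟩
  unfold big at h
  omega

lemma boundA (m n : ℕ) (hn : 1 ≤ n) (h : (big m n).card ≤ 1) (k : ℕ)
    (hk : n.primeCounting + 1 + k ≤ n) :
    (m + 1) ^ k ≤ (n - 1).factorial :=
  le_trans (Nat.pow_le_pow_right (by omega) (by have := primeFactors_card m n h; omega))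
    (removal m n hn)

/-- Upper bound for the binomial coefficient. -/
lemma boundB (m n T : ℕ) (hn : 1 ≤ n) (h : (big m n).card ≤ 1)
    (hT : ∀ q : ℕ, q.Prime → q ≤ n → (m + n) < q ^ 2 → q ∣ (m + n).choose n → q ≤ T) :
    (m + n).choose n ≤ 4 ^ T * (m + n) ^ ((m + n).sqrt.primeCounting + 1) := by
  classical
  set N := m + n with hN
  set C := N.choose n with hC
  have hC0 : C ≠ 0 := (Nat.choose_pos (by omega)).ne'
  set S := C.primeFactors
  have hprod : ∏ q ∈ S, q ^ C.factorization q = C := by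
    have := Nat.prod_factorization_pow_eq_self hC0
    rwa [Finsupp.prod, Nat.support_factorization] at this
  have hN0 : 0 < N := by omega
  have e1 := Finset.prod_filter_mul_prod_filter_not S (fun q => q ≤ N.sqrt)
    (fun q => q ^ C.factorization q)
  have e2 := Finset.prod_filter_mul_prod_filter_not (S.filter (fun q => ¬ q ≤ N.sqrt))
    (fun q => q ≤ n) (fun q => q ^ C.factorization q)
  have b1 : ∏ q ∈ S.filter (fun q => q ≤ N.sqrt), q ^ C.factorization q
      ≤ N ^ N.sqrt.primeCounting := by
    calc _ ≤ ∏ q ∈ S.filter (fun q => q ≤ N.sqrt), N :=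
          Finset.prod_le_prod' fun q _ => Nat.pow_factorization_choose_le hN0
      _ = N ^ (S.filter (fun q => q ≤ N.sqrt)).card := by rw [Finset.prod_const]
      _ ≤ _ := by
        refine Nat.pow_le_pow_right hN0 ?_
        rw [← Nat.primesLE_card_eq_primeCounting]
        refine Finset.card_le_card fun p hp => ?_
        rw [Finset.mem_filter] at hp
        exact Nat.mem_primesLE.mpr ⟨hp.2, Nat.prime_of_mem_primeFactors hp.1⟩
  have b2 : ∏ q ∈ (S.filter (fun q => ¬ q ≤ N.sqrt)).filter (fun q => q ≤ n),
      q ^ C.factorization q ≤ 4 ^ T := by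
    refine le_trans ?_ (primorial_le_four_pow T)
    rw [primorial_eq_prod_primesLE]
    have hsub : (S.filter (fun q => ¬ q ≤ N.sqrt)).filter (fun q => q ≤ n) ⊆ Nat.primesLE T := by
      intro q hq
      simp only [Finset.mem_filter] at hq
      have hp := Nat.prime_of_mem_primeFactors hq.1.1
      exact Nat.mem_primesLE.mpr ⟨hT q hp hq.2 (by
        have := hq.1.2; rw [not_le, Nat.sqrt_lt'] at this; exact this)
        (Nat.dvd_of_mem_primeFactors hq.1.1), hp⟩
    calc _ ≤ ∏ q ∈ (S.filter (fun q => ¬ q ≤ N.sqrt)).filter (fun q => q ≤ n), q := by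
          refine Finset.prod_le_prod' fun q hq => ?_
          simp only [Finset.mem_filter] at hq
          have h2 := hq.1.2
          rw [not_le, Nat.sqrt_lt'] at h2
          have h1 : C.factorization q ≤ 1 := Nat.factorization_choose_le_one h2
          calc q ^ C.factorization q ≤ q ^ 1 :=
                Nat.pow_le_pow_right (Nat.prime_of_mem_primeFactors hq.1.1).pos h1
            _ = q := pow_one q
      _ ≤ _ := Finset.prod_le_prod_of_subset_of_one_le' hsub
          fun q hq _ => (Nat.prime_of_mem_primesLE hq).one_le
  have b3 : ∏ q ∈ (S.filter (fun q => ¬ q ≤ N.sqrt)).filter (fun q => ¬ q ≤ n),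
      q ^ C.factorization q ≤ N := by
    calc _ ≤ ∏ q ∈ (S.filter (fun q => ¬ q ≤ N.sqrt)).filter (fun q => ¬ q ≤ n), N :=
          Finset.prod_le_prod' fun q _ => Nat.pow_factorization_choose_le hN0
      _ = N ^ ((S.filter (fun q => ¬ q ≤ N.sqrt)).filter (fun q => ¬ q ≤ n)).card := by
          rw [Finset.prod_const]
      _ ≤ N ^ 1 := by
          refine Nat.pow_le_pow_right hN0 (le_trans (Finset.card_le_card fun q hq => ?_) h)
          simp only [Finset.mem_filter] at hq
          have hd : C ∣ P m n := by rw [P_eq]; exact Dvd.intro_left _ rfl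
          unfold big
          rw [Finset.mem_filter]
          exact ⟨Nat.primeFactors_mono hd (P_ne_zero m n) hq.1.1, not_le.mp hq.2⟩
      _ = N := pow_one N
  rw [← e2, hprod] at e1
  calc C = _ := e1.symm
    _ ≤ N ^ N.sqrt.primeCounting * (4 ^ T * N) := by gcongr
    _ = _ := by ring

lemma choose_step (n d : ℕ) (hn : 1 ≤ n) (h : 10 * (2 * n + d) ≤ 27 * n) :
    4 ^ (3 * n + d) ≤ ((2 * n + d).choose n * (2 * n)) ^ 3 := by
  induction d with
  | zero =>
    have := Nat.four_pow_le_two_mul_self_mul_centralBinom n hn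
    rw [Nat.centralBinom] at this
    calc 4 ^ (3 * n + 0) = (4 ^ n) ^ 3 := by rw [← pow_mul]; congr 1; ring
      _ ≤ (2 * n * (2 * n).choose n) ^ 3 := Nat.pow_le_pow_left this 3
      _ = _ := by rw [Nat.add_zero, mul_comm]
  | succ d ih =>
    have ih := ih (by omega)
    have e := Nat.choose_mul_succ_eq (2 * n + d) n
    set A := (2 * n + d).choose n
    set B := (2 * n + (d + 1)).choose n with hB
    obtain ⟨a, ha⟩ : ∃ a, a = n + d + 1 := ⟨_, rfl⟩
    have e' : A * (a + n) = B * a := by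
      have h1 : 2 * n + d + 1 - n = a := by omega
      have h2 : 2 * n + d + 1 = a + n := by omega
      rw [h1] at e
      rw [hB, ← h2]
      exact e
    have h10 : 10 * a ≤ 17 * n := by omega
    have hc : 4 * a ^ 3 ≤ (a + n) ^ 3 := by
      have h3 : (10 * a + 17 * a) ^ 3 ≤ (17 * n + 17 * a) ^ 3 := Nat.pow_le_pow_left (by omega) 3
      have h4 : (10 * a + 17 * a) ^ 3 = 19683 * a ^ 3 := by ring
      have h5 : (17 * n + 17 * a) ^ 3 = 4913 * (a + n) ^ 3 := by ring
      rw [h4, h5] at h3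
      omega
    have hpos : 0 < a ^ 3 := pow_pos (by omega) 3
    refine Nat.le_of_mul_le_mul_right ?_ hpos
    calc 4 ^ (3 * n + (d + 1)) * a ^ 3 = 4 ^ (3 * n + d) * (4 * a ^ 3) := by ring
      _ ≤ (A * (2 * n)) ^ 3 * (a + n) ^ 3 := Nat.mul_le_mul ih hc
      _ = (A * (a + n)) ^ 3 * (2 * n) ^ 3 := by ring
      _ = (B * a) ^ 3 * (2 * n) ^ 3 := by rw [e']
      _ = (B * (2 * n)) ^ 3 * a ^ 3 := by ring

lemma log_factorial_le (n : ℕ) (hn : 1 ≤ n) :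
    Real.log (n.factorial : ℝ) ≤ 1 + Real.log n + n * Real.log n - n := by
  induction n, hn using Nat.le_induction with
  | base => simp
  | succ n hn ih =>
    have hn0 : (0 : ℝ) < n := by exact_mod_cast hn
    have h1 : Real.log ((n + 1).factorial : ℝ) = Real.log (n + 1) + Real.log n.factorial := by
      rw [Nat.factorial_succ, Nat.cast_mul, Real.log_mul (by positivity)
        (by exact_mod_cast Nat.factorial_ne_zero n)]
      push_cast
      rfl
    have h2 : 1 - ((n + 1 : ℝ) / n)⁻¹ ≤ Real.log ((n + 1 : ℝ) / n) :=
      Real.one_sub_inv_le_log_of_pos (by positivity)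
    rw [Real.log_div (by positivity) (by positivity)] at h2
    have h3 : 1 - ((n + 1 : ℝ) / n)⁻¹ = 1 / (n + 1) := by field_simp; ring
    rw [h3, div_le_iff₀ (by positivity)] at h2
    rw [h1]
    push_cast
    nlinarith

/-- The primes below 170. -/
def smallPrimes : List ℕ :=
  [2, 3, 5, 7, 11, 13, 17, 19, 23, 29, 31, 37, 41, 43, 47, 53, 59, 61, 67, 71, 73, 79, 83, 89,
    97, 101, 103, 107, 109, 113, 127, 131, 137, 139, 149, 151, 157, 163, 167]

/-- Number of listed primes up to `n`. -/
def cnt (n : ℕ) : ℕ := (smallPrimes.filter fun p => Nat.ble p n).length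

lemma small_complete : ∀ p < 170, p ∈ smallPrimes ∨ p < 2 ∨
    [2, 3, 5, 7, 11].any (fun d => Nat.beq (p % d) 0 && Nat.blt d p) = true ∨ p = 169 := by
  decide +kernel

lemma pi_le_cnt (n : ℕ) (hn : n < 170) : n.primeCounting ≤ cnt n := by
  rw [← Nat.primesLE_card_eq_primeCounting]
  refine le_trans (Finset.card_le_card (t := (smallPrimes.filter fun p => Nat.ble p n).toFinset)
    fun p hp => ?_) (List.toFinset_card_le _)
  obtain ⟨hpn, hp⟩ := Nat.mem_primesLE.mp hp
  rw [List.mem_toFinset, List.mem_filter, Nat.ble_eq]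
  refine ⟨?_, hpn⟩
  rcases small_complete p (by omega) with h | h | h | h
  · exact h
  · exact absurd hp.two_le (by omega)
  · exfalso
    rw [List.any_eq_true] at h
    obtain ⟨d, hd, hdp⟩ := h
    simp only [Bool.and_eq_true, Nat.beq_eq, Nat.blt_eq] at hdp
    have hd2 : 2 ≤ d := by
      simp only [List.mem_cons, List.not_mem_nil, or_false] at hd
      omega
    rcases (Nat.dvd_prime hp).mp (Nat.dvd_of_mod_eq_zero hdp.1) with h1 | h1 <;> omega
  · rw [h] at hp
    norm_num at hp

lemma pi_le_third (n : ℕ) (hn : 48 ≤ n) : 3 * (n.primeCounting + 1) ≤ n := by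
  by_cases h : n < 170
  · have : ∀ n < 170, 48 ≤ n → 3 * (cnt n + 1) ≤ n := by decide +kernel
    have h1 := this n h hn
    have h2 := pi_le_cnt n h
    omega
  · have h1 := Nat.primeCounting'_add_le (a := 30) (k := 31) (by norm_num) (by norm_num) (n - 30)
    have h2 : Nat.primeCounting' 31 ≤ 10 :=
      (pi_le_cnt 30 (by norm_num)).trans (by decide +kernel)
    have h3 : Nat.totient 30 = 8 := by decide +kernel
    rw [h3] at h1
    have h4 : 31 + (n - 30) = n + 1 := by omega
    rw [h4] at h1
    rw [Nat.primeCounting]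
    omega

lemma pi_le_half (k : ℕ) (hk : 2 ≤ k) : 2 * k.primeCounting ≤ k + 2 := by
  have h1 := Nat.primeCounting_add_le (a := 2) (k := 2) (by norm_num) (by norm_num) (k - 2)
  have h2 : Nat.primeCounting 2 ≤ 1 :=
    (pi_le_cnt 2 (by norm_num)).trans (by decide +kernel)
  have h3 : Nat.totient 2 = 1 := by decide +kernel
  rw [h3] at h1
  have h4 : 2 + (k - 2) = k := by omega
  rw [h4] at h1
  omega

lemma boundA' (m n : ℕ) (hn : 48 ≤ n) (h : (big m n).card ≤ 1) :
    (m + 1) ^ (2 * n) ≤ (n - 1).factorial ^ 3 := by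
  have h1 := pi_le_third n hn
  have h2 := boundA m n (by omega) h (n - n / 3) (by omega)
  calc (m + 1) ^ (2 * n) ≤ (m + 1) ^ ((n - n / 3) * 3) := Nat.pow_le_pow_right (by omega) (by omega)
    _ = ((m + 1) ^ (n - n / 3)) ^ 3 := by rw [pow_mul]
    _ ≤ _ := Nat.pow_le_pow_left h2 3

lemma boundA'' (m n : ℕ) (hn : 48 ≤ n) (h : (big m n).card ≤ 1) :
    m * m < n * n * n := by
  have h1 := boundA' m n hn h
  have h2 : (n - 1).factorial ≤ n ^ n := by
    calc (n - 1).factorial ≤ n.factorial := Nat.factorial_le (by omega)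
      _ ≤ n ^ n := Nat.factorial_le_pow n
  have h3 : ((m + 1) ^ 2) ^ n ≤ (n ^ 3) ^ n := by
    calc ((m + 1) ^ 2) ^ n = (m + 1) ^ (2 * n) := by rw [pow_mul]
      _ ≤ (n - 1).factorial ^ 3 := h1
      _ ≤ (n ^ n) ^ 3 := Nat.pow_le_pow_left h2 3
      _ = (n ^ 3) ^ n := by rw [← pow_mul, ← pow_mul, mul_comm]
  have h4 := (Nat.pow_le_pow_iff_left (by omega : n ≠ 0)).mp h3
  nlinarith

lemma log_lin (x c : ℝ) (k : ℕ) (hx : 0 < x) (hc : c = 2 ^ k) :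
    Real.log x ≤ k * Real.log 2 + x / c - 1 := by
  have hc0 : 0 < c := by rw [hc]; positivity
  have h := Real.log_le_sub_one_of_pos (div_pos hx hc0)
  rw [Real.log_div hx.ne' hc0.ne', hc, Real.log_pow] at h
  rw [hc]
  linarith

/-- Final numerical contradiction for `N ≤ 4 n`. -/
lemma numeric_ab (n E lN : ℝ) (hn : 2000 ≤ n) (hE : E ≤ √n + 2) (hlN0 : 0 ≤ lN)
    (hlN : lN ≤ Real.log (4 * n)) (h : 0.323 * n - 1 / 2 ≤ Real.log (2 * n) + E * lN) : False := by
  obtain ⟨t, ht⟩ : ∃ t, t = √n := ⟨_, rfl⟩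
  have hn0 : (0 : ℝ) ≤ n := by linarith
  have htt : n = t ^ 2 := by rw [ht, Real.sq_sqrt hn0]
  have ht0 : 0 ≤ t := by rw [ht]; positivity
  have ht44 : 44 ≤ t := by
    rw [ht]
    exact Real.le_sqrt_of_sq_le (by linarith)
  have h4 : Real.log (4 * n) = 2 * Real.log (2 * t) := by
    rw [show 4 * n = (2 * t) ^ 2 by rw [htt]; ring, Real.log_pow]
    norm_num
  have h2 : Real.log (2 * n) ≤ Real.log (4 * n) := Real.log_le_log (by linarith) (by linarith)
  have hl := log_lin (2 * t) 64 6 (by linarith) (by norm_num)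
  have hlog2 := Real.log_two_lt_d9
  have hq : Real.log (4 * n) ≤ 6.318 + t / 16 := by
    rw [h4]
    push_cast at hl
    linarith
  rw [← ht] at hE
  have h5 : E * lN ≤ (t + 2) * (6.318 + t / 16) := by
    calc E * lN ≤ (t + 2) * lN := by gcongr
      _ ≤ (t + 2) * (6.318 + t / 16) := by
        have := hlN.trans hq
        gcongr
  rw [htt] at h
  rw [htt] at h2 hq
  nlinarith

/-- Final numerical contradiction for `N > 4 n`. -/
lemma numeric_c (n E lN : ℝ) (hn : 2000 ≤ n) (hlN0 : 0 ≤ lN)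
    (hE : E ≤ Real.exp (lN / 2) / 2 + 2)
    (hlN : lN ≤ 3 / 2 * Real.log n - 1.15)
    (h : 0.653 * n ≤ 1 + Real.log n + E * lN) : False := by
  obtain ⟨u, hu⟩ : ∃ u, u = √√n := ⟨_, rfl⟩
  have hn0 : (0 : ℝ) ≤ n := by linarith
  have huu : n = u ^ 4 := by
    rw [hu, show (4 : ℕ) = 2 * 2 from rfl, pow_mul, Real.sq_sqrt (by positivity), Real.sq_sqrt hn0]
  have hu6 : 6.6 ≤ u := by
    rw [hu]
    refine Real.le_sqrt_of_sq_le (Real.le_sqrt_of_sq_le ?_)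
    norm_num
    linarith
  have hu0 : 0 < u := by linarith
  have h4 : Real.log n = 4 * Real.log u := by
    rw [huu, Real.log_pow]
    norm_num
  have hl := log_lin u 8 3 hu0 (by norm_num)
  have hlog2 := Real.log_two_lt_d9
  push_cast at hl
  have hq : Real.log u ≤ 1.08 + u / 8 := by linarith
  have hexp : Real.exp (lN / 2) ≤ 0.6 * u ^ 3 := by
    have h1 : lN / 2 ≤ 3 * Real.log u + (-0.575) := by rw [h4] at hlN; linarith
    have h2 : Real.exp (-0.575) ≤ 0.6 := by
      have h3 : (1.7 : ℝ) ≤ Real.exp 0.575 := by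
        have := Real.quadratic_le_exp_of_nonneg (x := 0.575) (by norm_num)
        norm_num at this ⊢
        linarith
      rw [Real.exp_neg]
      calc (Real.exp 0.575)⁻¹ ≤ (1.7)⁻¹ := by gcongr
        _ ≤ 0.6 := by norm_num
    calc Real.exp (lN / 2) ≤ Real.exp (3 * Real.log u + (-0.575)) := Real.exp_le_exp.mpr h1
      _ = u ^ 3 * Real.exp (-0.575) := by
        rw [Real.exp_add, show 3 * Real.log u = Real.log (u ^ 3) by rw [Real.log_pow]; norm_num,
          Real.exp_log (by positivity)]
      _ ≤ u ^ 3 * 0.6 := by gcongr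
      _ = 0.6 * u ^ 3 := by ring
  have hlN2 : lN ≤ 6 * (1.08 + u / 8) := by rw [h4] at hlN; linarith
  have h5 : E * lN ≤ (0.3 * u ^ 3 + 2) * (6 * (1.08 + u / 8)) := by
    calc E * lN ≤ (0.3 * u ^ 3 + 2) * lN := by gcongr; linarith
      _ ≤ _ := by gcongr
  rw [h4, huu] at h
  have h6 : 0.653 * u ^ 4 ≤ 1 + 4 * (1.08 + u / 8) + (0.3 * u ^ 3 + 2) * (6 * (1.08 + u / 8)) := by
    linarith
  have h7 : 0 ≤ (u - 6.6) * u ^ 3 := mul_nonneg (by linarith) (by positivity)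
  have h8 : 0 ≤ (u - 6.6) * u ^ 2 := mul_nonneg (by linarith) (by positivity)
  have h9 : 0 ≤ (u - 6.6) * u := mul_nonneg (by linarith) (by positivity)
  nlinarith

lemma large (m n : ℕ) (hmn : n ≤ m) (hn : 2000 ≤ n) : 2 ≤ (big m n).card := by
  by_contra hcon
  have hb : (big m n).card ≤ 1 := by omega
  obtain ⟨N, hN⟩ : ∃ N, N = m + n := ⟨_, rfl⟩
  obtain ⟨e, he⟩ : ∃ e, e = N.sqrt.primeCounting + 1 := ⟨_, rfl⟩
  have hnR : (2000 : ℝ) ≤ n := by exact_mod_cast hn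
  have hn0 : (0 : ℝ) < n := by linarith
  have hNR : (N : ℝ) = m + n := by rw [hN]; push_cast; rfl
  have hmR : (n : ℝ) ≤ m := by exact_mod_cast hmn
  have hN0 : (0 : ℝ) < N := by linarith
  have hE : (e : ℝ) ≤ √N / 2 + 2 := by
    have h1 : 2 ≤ N.sqrt := by rw [Nat.le_sqrt]; omega
    have h2 := pi_le_half N.sqrt h1
    have h3 : (N.sqrt : ℝ) ≤ √N := Real.nat_sqrt_le_real_sqrt
    have h4 : (2 : ℝ) * e ≤ N.sqrt + 4 := by
      have : 2 * e ≤ N.sqrt + 4 := by omega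
      exact_mod_cast this
    linarith
  have hlN0 : 0 ≤ Real.log N := Real.log_nonneg (by linarith)
  have hlog2 := Real.log_two_lt_d9
  have hlog2' := Real.log_two_gt_d9
  have hlog4 : Real.log 4 = 2 * Real.log 2 := by
    rw [show (4 : ℝ) = 2 ^ 2 by norm_num, Real.log_pow]
    norm_num
  by_cases hc : N ≤ 4 * n
  · refine numeric_ab n e (Real.log N) hnR ?_ hlN0 ?_ ?_
    · have : √(N : ℝ) ≤ 2 * √(n : ℝ) := by
        rw [show (2 : ℝ) * √(n : ℝ) = √(4 * n) by
          rw [Real.sqrt_mul (by norm_num), show (4 : ℝ) = 2 ^ 2 by norm_num,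
            Real.sqrt_sq (by norm_num)]]
        exact Real.sqrt_le_sqrt (by exact_mod_cast hc)
      linarith
    · exact Real.log_le_log hN0 (by exact_mod_cast hc)
    · have key : ∃ a : ℕ, 7 * n ≤ 10 * a + 10 ∧ 4 ^ a ≤ (2 * n) ^ 3 * N ^ (3 * e) := by
        by_cases ha : 10 * N ≤ 27 * n
        · refine ⟨n, by omega, ?_⟩
          have hB := boundB m n (N / 3) (by omega) hb (by
            intro q hq hqn hqN hqd
            by_contra hlt
            rw [← hN] at hqd
            have h0 := Nat.factorization_choose_of_lt_three_mul (p := q) (n := N) (k := n)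
              (by omega) hqn (by omega) (by omega)
            have h1 := (hq.dvd_iff_one_le_factorization
              (Nat.choose_pos (by omega : n ≤ N)).ne').mp hqd
            omega)
          have hS := choose_step n (N - 2 * n) (by omega) (by omega)
          have e1 : 2 * n + (N - 2 * n) = N := by omega
          have e2 : 3 * n + (N - 2 * n) = N + n := by omega
          rw [e1, e2] at hS
          rw [← hN, ← he] at hB
          have hh : 4 ^ N * 4 ^ n ≤ 4 ^ N * ((2 * n) ^ 3 * N ^ (3 * e)) := by
            calc 4 ^ N * 4 ^ n = 4 ^ (N + n) := by rw [pow_add]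
              _ ≤ (N.choose n * (2 * n)) ^ 3 := hS
              _ ≤ (4 ^ (N / 3) * N ^ e * (2 * n)) ^ 3 := by gcongr
              _ = 4 ^ (N / 3 * 3) * ((2 * n) ^ 3 * N ^ (3 * e)) := by
                rw [mul_pow, mul_pow, ← pow_mul, ← pow_mul, mul_comm e 3]; ring
              _ ≤ _ := by
                refine Nat.mul_le_mul_right _ (Nat.pow_le_pow_right (by norm_num) ?_)
                omega
          exact Nat.le_of_mul_le_mul_left hh (by positivity)
        · have hB := boundB m n n (by omega) hb (fun q _ hqn _ _ => hqn)
          rw [← hN, ← he] at hB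
          obtain ⟨d, hd⟩ : ∃ d, d = 7 * n / 10 := ⟨_, rfl⟩
          refine ⟨d, by omega, ?_⟩
          have hS := choose_step n d (by omega) (by omega)
          have hmono : (2 * n + d).choose n ≤ N.choose n :=
            Nat.choose_mono n (by omega : 2 * n + d ≤ N)
          have hh : 4 ^ (3 * n) * 4 ^ d ≤ 4 ^ (3 * n) * ((2 * n) ^ 3 * N ^ (3 * e)) := by
            calc 4 ^ (3 * n) * 4 ^ d = 4 ^ (3 * n + d) := by rw [pow_add]
              _ ≤ ((2 * n + d).choose n * (2 * n)) ^ 3 := hS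
              _ ≤ (4 ^ n * N ^ e * (2 * n)) ^ 3 := by
                have := hmono.trans hB
                gcongr
              _ = _ := by
                rw [mul_pow, mul_pow, ← pow_mul, ← pow_mul, mul_comm e 3, mul_comm n 3]; ring
          exact Nat.le_of_mul_le_mul_left hh (by positivity)
      obtain ⟨a, ha, hk⟩ := key
      have hkR : (4 : ℝ) ^ a ≤ (2 * n) ^ 3 * (N : ℝ) ^ (3 * e) := by exact_mod_cast hk
      have hl := Real.log_le_log (by positivity) hkR
      rw [Real.log_mul (by positivity) (by positivity), Real.log_pow, Real.log_pow, Real.log_pow,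
        hlog4] at hl
      push_cast at hl
      have haR : (7 : ℝ) * n ≤ 10 * a + 10 := by exact_mod_cast ha
      have : (0.7 * n - 1) * (2 * Real.log 2) ≤ a * (2 * Real.log 2) := by
        gcongr
        linarith
      nlinarith
  · have hB := boundB m n n (by omega) hb (fun q _ hqn _ _ => hqn)
    rw [← hN, ← he] at hB
    have hm3 : 3 * (n : ℝ) ≤ m := by
      have : 3 * n ≤ m := by omega
      exact_mod_cast this
    have hm0 : (0 : ℝ) < m := by linarith
    have hlm : Real.log 3 + Real.log n ≤ Real.log m := by
      rw [← Real.log_mul (by norm_num) hn0.ne']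
      exact Real.log_le_log (by positivity) hm3
    have hlog3 : 3 / 2 * Real.log 2 ≤ Real.log 3 := by
      have h1 : Real.log ((2 : ℝ) ^ 3) ≤ Real.log ((3 : ℝ) ^ 2) :=
        Real.log_le_log (by norm_num) (by norm_num)
      rw [Real.log_pow, Real.log_pow] at h1
      push_cast at h1
      linarith
    have hfac := log_factorial_le n (by omega)
    have hfp : (0 : ℝ) < n.factorial := by exact_mod_cast Nat.factorial_pos n
    refine numeric_c n e (Real.log N) hnR hlN0 ?_ ?_ ?_
    · have : Real.exp (Real.log N / 2) = √N := by
        rw [Real.sqrt_eq_rpow, Real.rpow_def_of_pos hN0]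
        congr 1
        ring
      rw [this]
      exact hE
    · have hA := boundA' m n (by omega) hb
      have hf1 : n.factorial = n * (n - 1).factorial :=
        (Nat.mul_factorial_pred (by omega)).symm
      have hf2 : (0 : ℝ) < (n - 1).factorial := by exact_mod_cast Nat.factorial_pos _
      have hAR : (m : ℝ) ^ (2 * n) ≤ ((n - 1).factorial : ℝ) ^ 3 := by
        have : m ^ (2 * n) ≤ (n - 1).factorial ^ 3 :=
          (Nat.pow_le_pow_left (by omega) _).trans hA
        exact_mod_cast this
      have hl := Real.log_le_log (by positivity) hAR
      rw [Real.log_pow, Real.log_pow] at hl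
      push_cast at hl
      have hl2 : Real.log n.factorial = Real.log n + Real.log (n - 1).factorial := by
        rw [hf1, Nat.cast_mul, Real.log_mul hn0.ne' hf2.ne']
      have h43 : Real.log N ≤ Real.log m + 1 / 3 := by
        have h1 : (N : ℝ) ≤ m * (4 / 3) := by linarith
        have h2 := Real.log_le_log hN0 h1
        rw [Real.log_mul hm0.ne' (by norm_num)] at h2
        have h3 := Real.log_le_sub_one_of_pos (show (0 : ℝ) < 4 / 3 by norm_num)
        linarith
      have h5 : (n : ℝ) * (2 * Real.log m) ≤ n * (3 * Real.log n - 3 + 0.0015) := by nlinarith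
      have h6 := le_of_mul_le_mul_left h5 hn0
      linarith
    · have hlow : m ^ n ≤ n.factorial * N.choose n := by
        rw [hN, ← P_eq]
        unfold P
        calc m ^ n = ∏ i ∈ Finset.Icc 1 n, m := by rw [Finset.prod_const, Nat.card_Icc]; simp
          _ ≤ _ := Finset.prod_le_prod' fun i _ => by omega
      have hk : m ^ n ≤ n.factorial * (4 ^ n * N ^ e) :=
        hlow.trans (Nat.mul_le_mul_left _ hB)
      have hkR : (m : ℝ) ^ n ≤ n.factorial * (4 ^ n * (N : ℝ) ^ e) := by exact_mod_cast hk
      have hl := Real.log_le_log (by positivity) hkR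
      rw [Real.log_mul hfp.ne' (by positivity), Real.log_mul (by positivity) (by positivity),
        Real.log_pow, Real.log_pow, Real.log_pow, hlog4] at hl
      have h5 : (n : ℝ) * (Real.log 3 + Real.log n) ≤ n * Real.log m := by gcongr
      have h6 : (n : ℝ) * (3 / 2 * Real.log 2) ≤ n * Real.log 3 := by gcongr
      have h7 : (n : ℝ) * Real.log 2 ≤ n * 0.6931471808 := by gcongr
      linarith

/-- All trial divisors up to 300 at once: this is `300!`. -/
def trial : ℕ := 306057512216440636035370461297268629388588804173576999416776741259476533176716867465515291422477573349939147888701726368864263907759003154226842927906974559841225476930271954604008012215776252176854255965356903506788725264321896264299365204576448830388909753943489625436053225980776521270822437639449120128678675368305712293681943649956460498166450227716500185176546469340112226034729724066333258583506870150169794168850353752137554910289126407157154830282284937952636580145235233156936482233436799254594095276820608062232812387383880817049600000000000000000000000000000000000000000000000000000000000000000000000000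

lemma trial_eq : trial = Nat.factorial 300 := by decide +kernel

lemma prime_of_gcd {p : ℕ} (h2 : 1 < p) (h3 : p < 90601) (h : Nat.gcd p trial = 1) : p.Prime := by
  by_contra hp
  have hle := Nat.minFac_sq_le_self (by omega) hp
  have hmp := Nat.minFac_prime (n := p) (by omega)
  have h300 : p.minFac ≤ 300 := by
    by_contra hlt
    have : 301 ≤ p.minFac := by omega
    nlinarith
  have hd : p.minFac ∣ trial := by
    rw [trial_eq]
    exact hmp.dvd_factorial.mpr h300
  have := Nat.dvd_gcd (Nat.minFac_dvd p) hd
  rw [h] at this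
  exact hmp.one_lt.ne' (Nat.dvd_one.mp this)

lemma prime_of_gcd_small {p : ℕ} (h2 : 1 < p) (h3 : p < 361)
    (h : Nat.gcd p 355687428096000 = 1) : p.Prime := by
  by_contra hp
  have hle := Nat.minFac_sq_le_self (by omega) hp
  have hmp := Nat.minFac_prime (n := p) (by omega)
  have h17 : p.minFac ≤ 18 := by
    by_contra hlt
    have : 19 ≤ p.minFac := by omega
    nlinarith
  have hd : p.minFac ∣ 355687428096000 := by
    have e : 355687428096000 = Nat.factorial 17 := by decide +kernel
    rw [e]
    refine hmp.dvd_factorial.mpr ?_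
    have : p.minFac ≠ 18 := by
      intro h18
      rw [h18] at hmp
      norm_num at hmp
    omega
  have := Nat.dvd_gcd (Nat.minFac_dvd p) hd
  rw [h] at this
  exact hmp.one_lt.ne' (Nat.dvd_one.mp this)

/-- A number whose primality is certified by the above. -/
def okp (p : ℕ) : Bool :=
  Nat.blt 1 p && ((Nat.blt p 361 && Nat.beq (Nat.gcd p 355687428096000) 1) ||
    (Nat.blt p 90601 && Nat.beq (Nat.gcd p trial) 1))

lemma okp_prime {p : ℕ} (h : okp p = true) : p.Prime := by
  simp only [okp, Bool.and_eq_true, Bool.or_eq_true, Nat.blt_eq, Nat.beq_eq] at h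
  rcases h.2 with h' | h'
  · exact prime_of_gcd_small h.1 h'.1 h'.2
  · exact prime_of_gcd h.1 h'.1 h'.2

/-- Checks that the list continues `a < b` increasingly by primes, that the difference of entries two
apart is at most `g`, and that the last but one entry exceeds `M`. -/
def chk (g M : ℕ) : ℕ → ℕ → List ℕ → Bool
  | a, _, [] => Nat.blt M a
  | a, b, c :: l => okp b && okp c && Nat.blt b c && Nat.ble c (a + g) && chk g M b c l

lemma chk_spec (g M m : ℕ) (hM : m ≤ M) (l : List ℕ) : ∀ a b : ℕ, a ≤ m →
    chk g M a b l = true →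
    ∃ p q : ℕ, p.Prime ∧ q.Prime ∧ m < p ∧ p < q ∧ q ≤ m + g := by
  induction l with
  | nil =>
    intro a b ha h
    simp only [chk, Nat.blt_eq] at h
    omega
  | cons c l ih =>
    intro a b ha h
    simp only [chk, Bool.and_eq_true, Nat.blt_eq, Nat.ble_eq] at h
    obtain ⟨⟨⟨⟨hb, hc⟩, hbc⟩, hca⟩, hr⟩ := h
    by_cases hbm : b ≤ m
    · exact ih b c hbm hr
    · exact ⟨b, c, okp_prime hb, okp_prime hc, by omega, hbc, by omega⟩

lemma of_chk (g h M a b : ℕ) (l : List ℕ) (hg : 48 ≤ g) (hM : h * h * h ≤ M * M) (hag : a ≤ g)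
    (hl : chk g M a b l = true) (m n : ℕ) (hmn : n ≤ m) (hgn : g ≤ n) (hnh : n ≤ h) :
    2 ≤ (big m n).card := by
  by_contra hcon
  have hb := boundA'' m n (by omega) (by omega)
  have hnh3 : n * n * n ≤ h * h * h := by gcongr
  have hmM : m ≤ M := by
    by_contra hlt
    have : M * M ≤ m * m := Nat.mul_le_mul (by omega) (by omega)
    omega
  obtain ⟨p, q, hp, hq, hmp, hpq, hqm⟩ := chk_spec g M m hmM l a b (by omega) hl
  refine hcon (two_le_of_two (p := p) (q := q) ?_ ?_ (by omega))
  · exact mem_big (i := p - m) hp (by omega) (by omega) (by omega)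
      (by rw [show m + (p - m) = p by omega])
  · exact mem_big (i := q - m) hq (by omega) (by omega) (by omega)
      (by rw [show m + (q - m) = q by omega])

lemma range_48 (m n : ℕ) (hmn : n ≤ m) (h1 : 48 ≤ n) (h2 : n ≤ 79) : 2 ≤ (big m n).card := by
  refine of_chk 48 79 703 47 71 ?_ (by norm_num) (by norm_num) (by norm_num) ?_ m n hmn h1 h2
  · exact
      [89, 113, 137, 157, 181, 199, 223, 241, 263, 283, 307, 331, 353, 373, 397, 421, 443, 467,
      491, 509, 523, 547, 571, 593, 617, 641, 661, 683, 701, 719, 743]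
  · decide +kernel

lemma range_80 (m n : ℕ) (hmn : n ≤ m) (h1 : 80 ≤ n) (h2 : n ≤ 159) : 2 ≤ (big m n).card := by
  refine of_chk 80 159 2005 79 113 ?_ (by norm_num) (by norm_num) (by norm_num) ?_ m n hmn h1 h2
  · exact
      [151, 191, 229, 269, 307, 347, 383, 421, 461, 499, 523, 563, 601, 641, 677, 709, 743,
      773, 811, 839, 877, 911, 947, 983, 1021, 1061, 1097, 1129, 1163, 1201, 1237, 1277, 1307,
      1327, 1367, 1399, 1439, 1471, 1511, 1549, 1583, 1621, 1657, 1697, 1733, 1759, 1789, 1823,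
      1861, 1901, 1933, 1973, 2011, 2039]
  · decide +kernel

lemma range_160 (m n : ℕ) (hmn : n ≤ m) (h1 : 160 ≤ n) (h2 : n ≤ 499) : 2 ≤ (big m n).card := by
  refine of_chk 160 499 11147 157 233 ?_ (by norm_num) (by norm_num) (by norm_num) ?_ m n hmn h1 h2
  · exact
      [313, 389, 467, 547, 619, 691, 769, 839, 919, 997, 1069, 1129, 1201, 1279, 1327, 1399,
      1471, 1549, 1627, 1699, 1777, 1847, 1913, 1993, 2069, 2143, 2221, 2297, 2377, 2447, 2521,
      2593, 2671, 2749, 2819, 2897, 2971, 3049, 3121, 3191, 3271, 3347, 3413, 3491, 3571, 3643,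
      3719, 3797, 3877, 3947, 4027, 4099, 4177, 4253, 4327, 4397, 4463, 4523, 4603, 4679, 4759,
      4831, 4909, 4987, 5059, 5119, 5197, 5273, 5351, 5431, 5507, 5581, 5659, 5737, 5813, 5881,
      5953, 6029, 6101, 6173, 6247, 6323, 6397, 6473, 6553, 6619, 6691, 6763, 6841, 6917, 6997,
      7069, 7129, 7207, 7283, 7351, 7417, 7489, 7561, 7639, 7717, 7793, 7873, 7951, 8017, 8093,
      8171, 8243, 8317, 8389, 8467, 8543, 8623, 8699, 8779, 8849, 8929, 9007, 9067, 9137, 9209,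
      9283, 9349, 9421, 9497, 9551, 9631, 9697, 9769, 9839, 9907, 9973, 10039, 10111, 10181,
      10259, 10337, 10399, 10477, 10531, 10607, 10687, 10753, 10831, 10909, 10987, 11059,
      11131, 11197, 11273]
  · decide +kernel

lemma range_500 (m n : ℕ) (hmn : n ≤ m) (h1 : 500 ≤ n) (h2 : n ≤ 1999) : 2 ≤ (big m n).card := by
  refine of_chk 500 1999 89376 499 743 ?_ (by norm_num) (by norm_num) (by norm_num) ?_ m n hmn h1 h2
  · exact
      [991, 1237, 1487, 1733, 1979, 2221, 2467, 2713, 2963, 3209, 3457, 3701, 3947, 4177, 4423,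
      4673, 4919, 5167, 5417, 5659, 5903, 6151, 6397, 6637, 6883, 7129, 7369, 7607, 7853, 8101,
      8329, 8573, 8821, 9067, 9311, 9551, 9791, 10039, 10289, 10531, 10781, 11027, 11273,
      11519, 11743, 11987, 12227, 12473, 12721, 12967, 13217, 13463, 13711, 13933, 14177,
      14423, 14669, 14897, 15139, 15383, 15629, 15877, 16127, 16369, 16619, 16843, 17093,
      17341, 17581, 17827, 18077, 18313, 18553, 18803, 19051, 19301, 19543, 19793, 20029,
      20269, 20509, 20759, 21001, 21247, 21493, 21739, 21977, 22193, 22441, 22691, 22937,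
      23173, 23417, 23663, 23911, 24151, 24391, 24631, 24877, 25127, 25373, 25621, 25867,
      26113, 26357, 26597, 26839, 27077, 27299, 27541, 27791, 28031, 28279, 28517, 28759,
      29009, 29251, 29501, 29741, 29989, 30223, 30469, 30713, 30949, 31193, 31397, 31643,
      31891, 32141, 32381, 32621, 32869, 33119, 33359, 33601, 33851, 34061, 34303, 34549,
      34781, 35027, 35267, 35509, 35759, 36007, 36251, 36497, 36739, 36979, 37223, 37463,
      37699, 37907, 38153, 38393, 38639, 38873, 39119, 39367, 39607, 39857, 40099, 40343,
      40591, 40841, 41081, 41299, 41549, 41777, 42023, 42257, 42499, 42743, 42989, 43237,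
      43487, 43721, 43969, 44207, 44453, 44701, 44939, 45181, 45427, 45677, 45893, 46141,
      46381, 46619, 46867, 47111, 47353, 47599, 47843, 48091, 48341, 48589, 48823, 49069,
      49307, 49549, 49789, 50033, 50273, 50513, 50753, 51001, 51241, 51487, 51721, 51971,
      52201, 52433, 52673, 52919, 53161, 53411, 53657, 53899, 54139, 54377, 54623, 54869,
      55117, 55351, 55589, 55837, 56087, 56333, 56569, 56813, 57059, 57301, 57529, 57773,
      58013, 58243, 58481, 58727, 58967, 59209, 59453, 59699, 59929, 60169, 60413, 60661,
      60901, 61151, 61381, 61631, 61879, 62129, 62351, 62597, 62827, 63073, 63317, 63559,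
      63809, 64037, 64283, 64513, 64763, 65011, 65257, 65497, 65731, 65981, 66221, 66467,
      66713, 66959, 67189, 67433, 67679, 67927, 68171, 68399, 68639, 68881, 69127, 69371,
      69593, 69833, 70079, 70327, 70573, 70823, 71069, 71317, 71563, 71809, 72053, 72287,
      72533, 72767, 73013, 73259, 73483, 73727, 73973, 74219, 74453, 74699, 74941, 75181,
      75431, 75679, 75913, 76163, 76403, 76651, 76883, 77101, 77351, 77591, 77839, 78079,
      78317, 78553, 78803, 79043, 79283, 79531, 79777, 80021, 80263, 80513, 80761, 81001,
      81239, 81463, 81707, 81953, 82193, 82421, 82657, 82903, 83137, 83383, 83621, 83869,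
      84089, 84319, 84559, 84809, 85049, 85297, 85531, 85781, 86029, 86269, 86509, 86753,
      86993, 87223, 87473, 87721, 87961, 88211, 88427, 88667, 88903, 89153, 89399, 89633]
  · decide +kernel

/-- Primes above `n` in the list dividing a term of the product. -/
def wit (m n : ℕ) : List ℕ :=
  smallPrimes.filter fun p => Nat.blt n p && Nat.blt (m / p) ((m + n) / p)

lemma wit_sub (m n p : ℕ) (hp : p ∈ wit m n) : p ∈ big m n := by
  rw [wit, List.mem_filter, Bool.and_eq_true, Nat.blt_eq, Nat.blt_eq] at hp
  obtain ⟨hs, h1, h2⟩ := hp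
  have hpp : ∀ p ∈ smallPrimes, p.Prime := by
    unfold smallPrimes
    intro p hp
    simp only [List.mem_cons, List.not_mem_nil, or_false] at hp
    rcases hp with rfl | rfl | rfl | rfl | rfl | rfl | rfl | rfl | rfl | rfl | rfl | rfl | rfl | rfl | rfl | rfl | rfl | rfl | rfl | rfl | rfl | rfl | rfl | rfl | rfl | rfl | rfl | rfl | rfl | rfl | rfl | rfl | rfl | rfl | rfl | rfl | rfl | rfl | rfl <;> norm_num
  have hp0 : 0 < p := by omega
  have hle : p * ((m + n) / p) ≤ m + n := Nat.mul_div_le _ _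
  have hlt : m < p * ((m + n) / p) := by
    have h3 := Nat.lt_mul_div_succ m hp0
    have h4 : p * (m / p + 1) ≤ p * ((m + n) / p) := Nat.mul_le_mul_left p h2
    omega
  refine mem_big (i := p * ((m + n) / p) - m) (hpp p hs) h1 (by omega) (by omega) ?_
  rw [show m + (p * ((m + n) / p) - m) = p * ((m + n) / p) by omega]
  exact Dvd.intro _ rfl

lemma wit_card (m n : ℕ) (h : 2 ≤ (wit m n).length) : 2 ≤ (big m n).card := by
  have hnd : (wit m n).Nodup := by
    refine List.Nodup.filter _ ?_
    unfold smallPrimes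
    decide
  calc 2 ≤ (wit m n).length := h
    _ = (wit m n).toFinset.card := (List.toFinset_card_of_nodup hnd).symm
    _ ≤ _ := Finset.card_le_card fun p hp => wit_sub m n p (List.mem_toFinset.mp hp)

lemma small_pi : ∀ n < 48, 6 ≤ n → cnt n + 1 ≤ n ∧
    (n - 1).factorial < 73 ^ (n - (cnt n + 1)) := by decide +kernel

lemma small_tab : ∀ n < 48, 6 ≤ n → ∀ m < 72, n ≤ m → 2 ≤ (wit m n).length ∨
    (n - 1).factorial < (m + 1) ^ (n - (cnt n + 1)) := by decide +kernel

lemma small (m n : ℕ) (hmn : n ≤ m) (h6 : 6 ≤ n) (h48 : n < 48) : 2 ≤ (big m n).card := by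
  by_contra hcon
  have h1 := small_pi n h48 h6
  have hpc := pi_le_cnt n (by omega)
  have hA := boundA m n (by omega) (by omega) (n - (cnt n + 1)) (by omega)
  have hm : m < 72 := by
    by_contra hlt
    have h2 : 73 ^ (n - (cnt n + 1)) ≤ (m + 1) ^ (n - (cnt n + 1)) :=
      Nat.pow_le_pow_left (by omega) _
    omega
  rcases small_tab n h48 h6 m hm hmn with h | h
  · exact hcon (wit_card m n h)
  · omega

end Syl

/-- For `m ≥ n ≥ 6`, `P(m,n)` is divisible by at least two distinct primes
strictly greater than `n`. -/
theorem stmt_12 (m n : ℕ) (hmn : m ≥ n) (hn : n ≥ 6) :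
    ((P m n).primeFactors.filter (fun p => n < p)).card ≥ 2 := by
  change 2 ≤ (Syl.big m n).card
  rcases lt_or_ge n 48 with h | h
  · exact Syl.small m n hmn hn h
  rcases lt_or_ge n 80 with h' | h'
  · exact Syl.range_48 m n hmn h (by omega)
  rcases lt_or_ge n 160 with h'' | h''
  · exact Syl.range_80 m n hmn h' (by omega)
  rcases lt_or_ge n 500 with h3 | h3
  · exact Syl.range_160 m n hmn h'' (by omega)
  rcases lt_or_ge n 2000 with h4 | h4
  · exact Syl.range_500 m n hmn h3 (by omega)
  · exact Syl.large m n hmn h4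
end

section
/- Let C = 1.25506 and let log denote the natural logarithm. For every integer n ≥ 1100, the number of primes p with n < p < 2n is at least ⌊(n/log n)·(log 4 − C − (log 2 · log 4)/log(2n))⌋. -/
/-- Upper bound for the central binomial coefficient in terms of the number of primes
in `(n, 2n)`. -/
theorem centralBinom_le_aux (n : ℕ) (n_large : 2 < n) :
    Nat.centralBinom n ≤ (2 * n) ^ Nat.sqrt (2 * n) * 4 ^ (2 * n / 3) *
      (2 * n) ^ ((Finset.Ioo n (2 * n)).filter Nat.Prime).card := by
  have n_pos : 0 < n := (Nat.zero_le _).trans_lt n_large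
  have n2_pos : 1 ≤ 2 * n := mul_pos (zero_lt_two' ℕ) n_pos
  let S := (Finset.range (2 * n / 3 + 1)).filter Nat.Prime
  let T := (Finset.Ioo n (2 * n)).filter Nat.Prime
  let f : ℕ → ℕ := fun x => x ^ n.centralBinom.factorization x
  have hdisj : Disjoint S T := by
    rw [Finset.disjoint_left]
    intro x hx hx'
    simp only [S, T, Finset.mem_filter, Finset.mem_range, Finset.mem_Ioo] at hx hx'
    omega
  have hprod : Nat.centralBinom n = (∏ x ∈ S, f x) * ∏ x ∈ T, f x := by
    rw [← Finset.prod_union hdisj]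
    refine (Eq.trans ?_ n.prod_pow_factorization_centralBinom).symm
    apply Finset.prod_subset
    · intro x hx
      simp only [S, T, Finset.mem_union, Finset.mem_filter, Finset.mem_range,
        Finset.mem_Ioo] at hx ⊢
      omega
    intro x hx h2x
    simp only [S, T, Finset.mem_union, Finset.mem_filter, Finset.mem_range,
      Finset.mem_Ioo] at hx h2x
    by_cases hp : x.Prime
    · have hne : x ≠ 2 * n := by
        rintro rfl
        exact Nat.not_prime_mul (by norm_num) (by omega) hp
      have h1 : ¬ (x < 2 * n / 3 + 1) := fun h => h2x (Or.inl ⟨h, hp⟩)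
      have h2 : ¬ (n < x ∧ x < 2 * n) := fun h => h2x (Or.inr ⟨h, hp⟩)
      change x ^ _ = 1
      rw [Nat.factorization_centralBinom_of_two_mul_self_lt_three_mul n_large (by omega)
        (by omega), Nat.pow_zero]
    · change x ^ _ = 1
      rw [Nat.factorization_eq_zero_of_not_prime n.centralBinom hp, Nat.pow_zero]
  rw [hprod]
  apply mul_le_mul'
  · rw [← Finset.prod_filter_mul_prod_filter_not S (· ≤ Nat.sqrt (2 * n))]
    apply mul_le_mul'
    · refine (Finset.prod_le_prod' fun p _ => (?_ : f p ≤ 2 * n)).trans ?_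
      · exact Nat.pow_factorization_choose_le (mul_pos two_pos n_pos)
      have : (Finset.Icc 1 (Nat.sqrt (2 * n))).card = Nat.sqrt (2 * n) := by
        rw [Nat.card_Icc, Nat.add_sub_cancel]
      rw [Finset.prod_const]
      refine pow_right_mono₀ n2_pos ((Finset.card_le_card fun x hx => ?_).trans this.le)
      obtain ⟨h1, h2⟩ := Finset.mem_filter.1 hx
      exact Finset.mem_Icc.mpr ⟨(Finset.mem_filter.1 h1).2.one_lt.le, h2⟩
    · refine le_trans ?_ (primorial_le_four_pow (2 * n / 3))
      refine (Finset.prod_le_prod' fun p hp => (?_ : f p ≤ p)).trans ?_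
      · obtain ⟨h1, h2⟩ := Finset.mem_filter.1 hp
        refine (pow_right_mono₀ (Finset.mem_filter.1 h1).2.one_lt.le ?_).trans (pow_one p).le
        exact Nat.factorization_choose_le_one (Nat.sqrt_lt'.mp <| not_le.1 h2)
      refine Finset.prod_le_prod_of_subset_of_one_le' (Finset.filter_subset _ _) ?_
      exact fun p hp _ => (Finset.mem_filter.1 hp).2.one_lt.le
  · refine (Finset.prod_le_prod' fun p _ => (?_ : f p ≤ 2 * n)).trans ?_
    · exact Nat.pow_factorization_choose_le (mul_pos two_pos n_pos)
    · rw [Finset.prod_const]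

/-- The logarithmic form of the estimate. -/
theorem log_bound_aux (n k : ℕ) (hn : 1100 ≤ n)
    (h : 4 ^ n ≤ n * ((2 * n) ^ Nat.sqrt (2 * n) * 4 ^ (2 * n / 3) * (2 * n) ^ k)) :
    2 * Real.log 2 * n ≤ Real.log n + √(2 * (n : ℝ)) * Real.log (2 * (n : ℝ)) +
      2 * (n : ℝ) / 3 * (2 * Real.log 2) + k * Real.log (2 * (n : ℝ)) := by
  have hn' : (1100 : ℝ) ≤ n := by exact_mod_cast hn
  have hR : (4 : ℝ) ^ n ≤ n * ((2 * n) ^ Nat.sqrt (2 * n) * 4 ^ (2 * n / 3) * (2 * n) ^ k) := by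
    exact_mod_cast h
  have h4 : Real.log 4 = 2 * Real.log 2 := by
    rw [show (4 : ℝ) = 2 ^ 2 by norm_num, Real.log_pow]; norm_num
  have hl := Real.log_le_log (by positivity) hR
  rw [Real.log_mul (by positivity) (by positivity), Real.log_mul (by positivity) (by positivity),
    Real.log_mul (by positivity) (by positivity), Real.log_pow, Real.log_pow, Real.log_pow,
    Real.log_pow, h4] at hl
  have hL : 0 ≤ Real.log (2 * (n : ℝ)) := Real.log_nonneg (by linarith)
  have ht : 0 < Real.log 2 := Real.log_pos (by norm_num)
  have hs : ((Nat.sqrt (2 * n) : ℕ) : ℝ) ≤ √(2 * (n : ℝ)) := by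
    have := @Real.nat_sqrt_le_real_sqrt (2 * n)
    simpa using this
  have hd : ((2 * n / 3 : ℕ) : ℝ) ≤ 2 * (n : ℝ) / 3 := by
    have := @Nat.cast_div_le ℝ _ _ _ (2 * n) 3
    simpa using this
  have e1 := mul_le_mul_of_nonneg_right hs hL
  have e2 := mul_le_mul_of_nonneg_right hd (by linarith : 0 ≤ 2 * Real.log 2)
  linarith

/-- For every integer `n ≥ 1100`, the number of primes in `(n, 2n)` is at least
`⌊(n/log n)·(log 4 − C − log 2 · log 4 / log(2n))⌋`, with `C = 1.25506`. -/
theorem stmt_14 (n : ℕ) (hn : n ≥ 1100) :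
    ⌊((n : ℝ) / Real.log n) *
        (Real.log 4 - 1.25506 - Real.log 2 * Real.log 4 / Real.log (2 * (n : ℝ)))⌋ ≤
      (((Finset.Ioo n (2 * n)).filter Nat.Prime).card : ℤ) := by
  have hc := centralBinom_le_aux n (by omega)
  have hf := Nat.four_pow_lt_mul_centralBinom n (by omega)
  generalize ((Finset.Ioo n (2 * n)).filter Nat.Prime).card = k at hc ⊢
  have H := log_bound_aux n k hn (hf.le.trans (Nat.mul_le_mul_left n hc))
  have hn' : (1100 : ℝ) ≤ n := by exact_mod_cast hn
  have h4 : Real.log 4 = 2 * Real.log 2 := by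
    rw [show (4 : ℝ) = 2 ^ 2 by norm_num, Real.log_pow]; norm_num
  have t1 := Real.log_two_gt_d9
  have t2 := Real.log_two_lt_d9
  have hLl : Real.log (2 * (n : ℝ)) = Real.log 2 + Real.log n :=
    Real.log_mul (by norm_num) (by positivity)
  have hl : 0 < Real.log n := Real.log_pos (by linarith)
  have hspos : 0 < √(2 * (n : ℝ)) := Real.sqrt_pos.mpr (by linarith)
  have hss : √(2 * (n : ℝ)) * √(2 * (n : ℝ)) = 2 * n := Real.mul_self_sqrt (by linarith)
  have hLs : Real.log (2 * (n : ℝ)) ≤ 6.31777 + √(2 * (n : ℝ)) / 32 := by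
    have a1 : Real.log (2 * (n : ℝ)) = 2 * Real.log (√(2 * (n : ℝ))) := by
      rw [Real.log_sqrt (by linarith)]; ring
    have a2 := Real.log_le_sub_one_of_pos (show 0 < √(2 * (n : ℝ)) / 64 by positivity)
    rw [Real.log_div hspos.ne' (by norm_num), show (64 : ℝ) = 2 ^ 6 by norm_num,
      Real.log_pow] at a2
    push_cast at a2
    rw [a1]
    linarith
  have hcase : Real.log n ≤ 7.63 ∨ (2048 : ℝ) ≤ n := by
    rcases le_total (2048 : ℝ) n with h | h
    · exact Or.inr h
    · left
      have := Real.log_le_log (by linarith) h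
      rw [show (2048 : ℝ) = 2 ^ 11 by norm_num, Real.log_pow] at this
      push_cast at this
      linarith
  rw [h4]
  generalize Real.log (2 * (n : ℝ)) = L at *
  generalize Real.log (n : ℝ) = l at *
  generalize √(2 * (n : ℝ)) = s at *
  generalize Real.log 2 = t at *
  generalize (n : ℝ) = x at *
  have hL0 : 0 < L := by linarith
  have key : x * ((2 * t - 1.25506) * l - 1.25506 * t) ≤ l * (k * L) := by
    have hsL : s * L ≤ 6.31777 * s + x / 16 := by
      have := mul_le_mul_of_nonneg_left hLs hspos.le
      nlinarith
    have hlow : 0.462 * x - x / 16 - 6.31777 * s - (6.31777 + s / 32) ≤ k * L := by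
      nlinarith
    rcases hcase with h | h
    · have hs : 46.9 ≤ s := by nlinarith
      have hs2 : 46.9 * s ≤ 2 * x := by nlinarith
      have hm : 0.0173 * x ≤ k * L := by linarith
      have h1 : (2 * t - 1.25506) * l - 1.25506 * t ≤ 0.0173 * l := by nlinarith
      calc _ ≤ x * (0.0173 * l) := by gcongr
        _ = l * (0.0173 * x) := by ring
        _ ≤ _ := by gcongr
    · have hs : 64 ≤ s := by nlinarith
      have hs2 : 64 * s ≤ 2 * x := by nlinarith
      have hm : 0.13124 * x ≤ k * L := by linarith
      have h1 : (2 * t - 1.25506) * l - 1.25506 * t ≤ 0.13124 * l := by nlinarith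
      calc _ ≤ x * (0.13124 * l) := by gcongr
        _ = l * (0.13124 * x) := by ring
        _ ≤ _ := by gcongr
  have hfin : x / l * (2 * t - 1.25506 - t * (2 * t) / L) ≤ k := by
    have e : x / l * (2 * t - 1.25506 - t * (2 * t) / L) =
        x * ((2 * t - 1.25506) * l - 1.25506 * t) / (l * L) := by
      rw [hLl] at hL0 ⊢
      field_simp
      ring
    rw [e, div_le_iff₀ (by positivity)]
    linarith
  have := (Int.floor_le _).trans hfin
  exact_mod_cast this
end

section
/- Let π(n) denote the number of primes ≤ n. For every integer n ≥ 620634, the number of primes p with n < p < 2n is at least ⌊0.05 · π(n)⌋. -/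
open Nat in
theorem aux_centralBinom_le (n : ℕ) (n_large : 2 < n) :
    centralBinom n ≤ (2 * n) ^ ((Finset.Ioo n (2 * n)).filter Nat.Prime).card *
      ((2 * n) ^ sqrt (2 * n) * 4 ^ (2 * n / 3)) := by
  have n_pos : 0 < n := (Nat.zero_le _).trans_lt n_large
  have n2_pos : 1 ≤ 2 * n := mul_pos (zero_lt_two' ℕ) n_pos
  let S := {p ∈ Finset.range (2 * n / 3 + 1) | Nat.Prime p}
  let T := (Finset.Ioo n (2 * n)).filter Nat.Prime
  let f x := x ^ n.centralBinom.factorization x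
  have hd : Disjoint T S := by
    rw [Finset.disjoint_left]
    intro p hp hq
    simp only [T, S, Finset.mem_filter, Finset.mem_Ioo, Finset.mem_range] at hp hq
    lia
  have key : ∏ x ∈ T ∪ S, f x = centralBinom n := by
    rw [← n.prod_pow_factorization_centralBinom]
    apply Finset.prod_subset
    · intro p hp
      simp only [T, S, Finset.mem_union, Finset.mem_filter, Finset.mem_Ioo, Finset.mem_range] at hp ⊢
      lia
    · intro x hx h2x
      change x ^ n.centralBinom.factorization x = 1
      by_cases hpx : x.Prime
      · have hne : x ≠ 2 * n := by
          rintro rfl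
          exact Nat.not_prime_mul (by norm_num) (by lia) hpx
        simp only [T, S, Finset.mem_union, Finset.mem_filter, Finset.mem_Ioo, Finset.mem_range, hpx,
          and_true] at hx h2x
        rw [factorization_centralBinom_of_two_mul_self_lt_three_mul n_large (by lia) (by lia),
          Nat.pow_zero]
      · rw [factorization_eq_zero_of_not_prime n.centralBinom hpx, Nat.pow_zero]
  rw [← key, Finset.prod_union hd]
  apply mul_le_mul'
  · exact Finset.prod_le_pow_card _ _ _ fun p _ => pow_factorization_choose_le (mul_pos two_pos n_pos)
  rw [← Finset.prod_filter_mul_prod_filter_not S (· ≤ sqrt (2 * n))]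
  apply mul_le_mul'
  · refine (Finset.prod_le_prod' fun p _ => (?_ : f p ≤ 2 * n)).trans ?_
    · exact pow_factorization_choose_le (mul_pos two_pos n_pos)
    have : (Finset.Icc 1 (sqrt (2 * n))).card = sqrt (2 * n) := by rw [card_Icc, Nat.add_sub_cancel]
    rw [Finset.prod_const]
    refine pow_right_mono₀ n2_pos ((Finset.card_le_card fun x hx => ?_).trans this.le)
    obtain ⟨h1, h2⟩ := Finset.mem_filter.1 hx
    exact Finset.mem_Icc.mpr ⟨(Finset.mem_filter.1 h1).2.one_lt.le, h2⟩
  · refine le_trans ?_ (primorial_le_four_pow (2 * n / 3))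
    refine (Finset.prod_le_prod' fun p hp => (?_ : f p ≤ p)).trans ?_
    · obtain ⟨h1, h2⟩ := Finset.mem_filter.1 hp
      refine (pow_right_mono₀ (Finset.mem_filter.1 h1).2.one_lt.le ?_).trans (pow_one p).le
      exact Nat.factorization_choose_le_one (sqrt_lt'.mp <| not_le.1 h2)
    refine Finset.prod_le_prod_of_subset_of_one_le' (Finset.filter_subset _ _) ?_
    exact fun p hp _ => (Finset.mem_filter.1 hp).2.one_lt.le

/-- Logarithmic form of the lower bound for the number of primes in `(n, 2n)`. -/
theorem aux_log_bound (n : ℕ) (hn : 620634 ≤ n) :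
    Real.log 4 * n / 3 ≤ ((((Finset.Ioo n (2 * n)).filter Nat.Prime).card : ℝ) +
      Real.sqrt (2 * n) + 1) * Real.log (2 * n) := by
  set k := ((Finset.Ioo n (2 * n)).filter Nat.Prime).card with hk
  have h1 := Nat.four_pow_lt_mul_centralBinom n (by lia)
  have h2 := aux_centralBinom_le n (by lia)
  rw [← hk] at h2
  have h3 : 4 ^ n ≤ n * ((2 * n) ^ k * ((2 * n) ^ Nat.sqrt (2 * n) * 4 ^ (2 * n / 3))) :=
    h1.le.trans (Nat.mul_le_mul_left _ h2)
  have h4 : (4 : ℝ) ^ n ≤ n * ((2 * n) ^ k * ((2 * n) ^ Nat.sqrt (2 * n) * 4 ^ (2 * n / 3))) := by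
    exact_mod_cast h3
  have hn0 : (0 : ℝ) < n := by
    have : 0 < n := by lia
    exact_mod_cast this
  have hn1 : (620634 : ℝ) ≤ n := by exact_mod_cast hn
  have h5 := Real.log_le_log (by positivity) h4
  rw [Real.log_mul (by positivity) (by positivity), Real.log_mul (by positivity) (by positivity),
    Real.log_mul (by positivity) (by positivity), Real.log_pow, Real.log_pow, Real.log_pow,
    Real.log_pow] at h5
  have h6 : Real.log n ≤ Real.log (2 * n) := Real.log_le_log hn0 (by linarith)
  have hy : 0 ≤ Real.log (2 * n) := Real.log_nonneg (by linarith)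
  have hL : 0 ≤ Real.log 4 := Real.log_nonneg (by norm_num)
  have h7 : ((Nat.sqrt (2 * n) : ℕ) : ℝ) ≤ Real.sqrt (2 * n) := by
    have := @Real.nat_sqrt_le_real_sqrt (2 * n)
    simpa using this
  have h8 : ((2 * n / 3 : ℕ) : ℝ) ≤ 2 * n / 3 := by
    have := @Nat.cast_div_le ℝ _ _ _ (2 * n) 3
    simpa using this
  have h9 := mul_le_mul_of_nonneg_right h7 hy
  have h10 := mul_le_mul_of_nonneg_right h8 hL
  linarith

/-- For every integer `n ≥ 620634`, the number of primes in `(n, 2n)` is at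
least `⌊0.05 · π(n)⌋`. -/
theorem stmt_16 (n : ℕ) (hn : n ≥ 620634) :
    ⌊(0.05 : ℝ) * (Nat.primeCounting n : ℝ)⌋ ≤
      (((Finset.Ioo n (2 * n)).filter Nat.Prime).card : ℤ) := by
  have hlow := aux_log_bound n hn
  set k := ((Finset.Ioo n (2 * n)).filter Nat.Prime).card with hk
  have hn1 : (620634 : ℝ) ≤ n := by exact_mod_cast hn
  have hn0 : (0 : ℝ) < n := by linarith
  have hup := Chebyshev.pi_le_log4_mul_div (x := (n : ℝ)) (by linarith)
  rw [Nat.floor_natCast, Real.log_sqrt hn0.le] at hup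
  suffices h : (0.05 : ℝ) * (Nat.primeCounting n : ℝ) ≤ k by
    have := (Int.floor_le _).trans h
    exact_mod_cast this
  have hlog2 := Real.log_two_gt_d9
  have hlog2' := Real.log_two_lt_d9
  have hL : Real.log 4 = 2 * Real.log 2 := by
    rw [show (4 : ℝ) = 2 ^ 2 by norm_num, Real.log_pow]; norm_num
  have hy : Real.log (2 * n) = Real.log 2 + Real.log n := Real.log_mul (by norm_num) hn0.ne'
  have hln : 9 * Real.log 2 ≤ Real.log n := by
    have := Real.log_le_log (by norm_num) (show (2 : ℝ) ^ 9 ≤ n by linarith)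
    rw [Real.log_pow] at this
    exact_mod_cast this
  set S := Real.sqrt n with hS
  set s := Real.sqrt S with hs
  have hSS : S ^ 2 = n := Real.sq_sqrt hn0.le
  have hss : s ^ 2 = S := Real.sq_sqrt (Real.sqrt_nonneg _)
  have hS1 : 784 ≤ S := Real.le_sqrt_of_sq_le (by linarith)
  have hs1 : 28 ≤ s := Real.le_sqrt_of_sq_le (by linarith)
  have hlogs : Real.log n = 4 * Real.log s := by
    rw [← hSS, ← hss, ← pow_mul, Real.log_pow]; norm_num
  have hls := Real.log_le_sub_one_of_pos (show 0 < s by linarith)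
  set y := Real.log (2 * n) with hydef
  have hy0 : 0 < y := by linarith
  have hyS : 5 * y ≤ S := by
    have : 20 * s ≤ s ^ 2 := by nlinarith
    linarith
  have hsq2 : Real.sqrt (2 * n) ≤ 1.42 * S := by
    apply Real.sqrt_le_iff.2 ⟨by linarith, ?_⟩
    rw [mul_pow, hSS]; linarith
  -- the upper bound for the prime counting function in terms of `y`
  have hup2 : Real.log 4 * n / (Real.log n / 2) ≤ (20 / 9) * (Real.log 4 * n / y) := by
    have : (20 / 9) * (Real.log 4 * n / y) = Real.log 4 * n / (9 * y / 20) := by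
      field_simp
    rw [this]
    apply div_le_div_of_nonneg_left
    · have : 0 < Real.log 4 := by linarith
      positivity
    · positivity
    · linarith
  have hlow2 : Real.log 4 * n / y / 3 ≤ k + Real.sqrt (2 * n) + 1 := by
    rw [div_right_comm, div_le_iff₀ hy0]; exact hlow
  have hbig : 5 * Real.log 4 * S ≤ Real.log 4 * n / y := by
    rw [le_div_iff₀ hy0, ← hSS]
    have : 0 ≤ Real.log 4 * S := by
      have : 0 < Real.log 4 := by linarith
      positivity
    nlinarith [mul_le_mul_of_nonneg_left hyS this]
  have hb2 : 6.9 * S ≤ Real.log 4 * n / y := by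
    refine le_trans ?_ hbig
    apply mul_le_mul_of_nonneg_right <;> linarith
  linarith
end

section
/- Let C = 1.25506, let log denote the natural logarithm, and let π(n) denote the number of primes ≤ n. For every real number θ with 0 < θ < log(4)/C − 1, there exists an integer n⋆ such that for every integer n ≥ n⋆, the number of primes p with n < p < 2n is at least ⌊θ · π(n)⌋. -/
open Finset in
theorem aux_binom (n : ℕ) (hn : 2 < n) :
    n.centralBinom ≤ (2 * n) ^ Nat.sqrt (2 * n) * 4 ^ (2 * n / 3) *
      (2 * n) ^ (((Finset.Ioo n (2 * n)).filter Nat.Prime).card) := by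
  set A := Finset.Icc 1 (Nat.sqrt (2 * n)) with hA
  set B := (Finset.range (2 * n / 3 + 1)).filter Nat.Prime with hB
  set D := (Finset.Ioo n (2 * n)).filter Nat.Prime with hD
  have hsq : Nat.sqrt (2 * n) ≤ 2 * n := Nat.sqrt_le_self _
  have hAs : Finset.range (2 * n + 1) ∩ A = A := by
    apply Finset.inter_eq_right.2
    intro x hx
    simp only [hA, Finset.mem_Icc, Finset.mem_range] at hx ⊢
    omega
  have hBs : Finset.range (2 * n + 1) ∩ B = B := by
    apply Finset.inter_eq_right.2
    intro x hx
    simp only [hB, Finset.mem_filter, Finset.mem_range] at hx ⊢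
    omega
  have hDs : Finset.range (2 * n + 1) ∩ D = D := by
    apply Finset.inter_eq_right.2
    intro x hx
    simp only [hD, Finset.mem_filter, Finset.mem_Ioo, Finset.mem_range] at hx ⊢
    omega
  have key : ∀ p ∈ Finset.range (2 * n + 1), p ^ n.centralBinom.factorization p ≤
      (if p ∈ A then 2 * n else 1) * (if p ∈ B then p else 1) * (if p ∈ D then 2 * n else 1) := by
    intro p hp
    have hA1 : 1 ≤ (if p ∈ A then 2 * n else 1) := by split_ifs <;> omega
    have hD1 : 1 ≤ (if p ∈ D then 2 * n else 1) := by split_ifs <;> omega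
    have hB1 : 1 ≤ (if p ∈ B then p else 1) := by
      split_ifs with h
      · exact (Finset.mem_filter.1 h).2.one_lt.le
      · exact le_rfl
    have hle : p ^ n.centralBinom.factorization p ≤ 2 * n :=
      Nat.pow_factorization_choose_le (by omega)
    by_cases hpp : p.Prime
    swap
    · rw [Nat.factorization_eq_zero_of_not_prime _ hpp, pow_zero]
      exact Nat.one_le_iff_ne_zero.2 (by positivity)
    by_cases h1 : p ∈ A
    · rw [if_pos h1] at *
      calc _ ≤ 2 * n := hle
        _ ≤ 2 * n * _ := Nat.le_mul_of_pos_right _ hB1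
        _ ≤ _ := Nat.le_mul_of_pos_right _ hD1
    by_cases h3 : p ∈ D
    · rw [if_pos h3]
      exact hle.trans (Nat.le_mul_of_pos_left _ (by positivity))
    have hpn : p ≤ n := by
      by_contra hc
      apply h3
      simp only [hD, Finset.mem_filter, Finset.mem_Ioo]
      refine ⟨⟨by omega, ?_⟩, hpp⟩
      rw [Finset.mem_range] at hp
      rcases Nat.lt_or_ge p (2 * n) with h | h
      · exact h
      · have : p = 2 * n := by omega
        subst this
        exact absurd hpp (Nat.not_prime_mul (by norm_num) (by omega))
    by_cases h2 : p ∈ B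
    · rw [if_neg h1, if_pos h2, if_neg h3, one_mul, mul_one]
      have hs : Nat.sqrt (2 * n) < p := by
        by_contra hc
        exact h1 (Finset.mem_Icc.2 ⟨hpp.one_lt.le, by omega⟩)
      refine (Nat.pow_le_pow_right hpp.pos ?_).trans (pow_one p).le
      exact Nat.factorization_choose_le_one (Nat.sqrt_lt'.mp hs)
    · have hbig : 2 * n < 3 * p := by
        by_contra hc
        apply h2
        simp only [hB, Finset.mem_filter, Finset.mem_range]
        exact ⟨by omega, hpp⟩
      rw [Nat.factorization_centralBinom_of_two_mul_self_lt_three_mul hn hpn hbig, pow_zero]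
      exact Nat.one_le_iff_ne_zero.2 (by positivity)
  calc n.centralBinom = _ := n.prod_pow_factorization_centralBinom.symm
    _ ≤ _ := Finset.prod_le_prod' key
    _ = (2 * n) ^ A.card * primorial (2 * n / 3) * (2 * n) ^ D.card := by
      rw [Finset.prod_mul_distrib, Finset.prod_mul_distrib, Finset.prod_ite_mem,
        Finset.prod_ite_mem, Finset.prod_ite_mem, hAs, hBs, hDs, Finset.prod_const,
        Finset.prod_const]
      rfl
    _ ≤ _ := by
      have : A.card = Nat.sqrt (2 * n) := by simp [hA]
      rw [this]
      gcongr
      exact primorial_le_four_pow _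

theorem aux_log (n : ℕ) (hn : 4 ≤ n) :
    (n : ℝ) / 3 * Real.log 4 ≤ (1 + Real.sqrt (2 * n) +
      (((Finset.Ioo n (2 * n)).filter Nat.Prime).card : ℝ)) * Real.log (2 * n) := by
  have h1 := (Nat.four_pow_lt_mul_centralBinom n hn).le.trans
    (Nat.mul_le_mul_left n (aux_binom n (by omega)))
  set k := ((Finset.Ioo n (2 * n)).filter Nat.Prime).card
  have hnpos : (0 : ℝ) < n := by positivity
  have h2 : (4 : ℝ) ^ n ≤ n * ((2 * n) ^ Nat.sqrt (2 * n) * 4 ^ (2 * n / 3) * (2 * n) ^ k) := by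
    exact_mod_cast h1
  have h3 := Real.log_le_log (by positivity) h2
  rw [Real.log_mul (by positivity) (by positivity), Real.log_mul (by positivity) (by positivity),
    Real.log_mul (by positivity) (by positivity), Real.log_pow, Real.log_pow, Real.log_pow,
    Real.log_pow] at h3
  have h4 : Real.log n ≤ Real.log (2 * n) := Real.log_le_log hnpos (by linarith)
  have h5 : ((Nat.sqrt (2 * n) : ℕ) : ℝ) ≤ Real.sqrt (2 * n) := by
    have := @Real.nat_sqrt_le_real_sqrt (2 * n)
    exact_mod_cast this
  have h6 : ((2 * n / 3 : ℕ) : ℝ) ≤ 2 * n / 3 := by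
    have := @Nat.cast_div_le ℝ _ _ _ (2 * n) 3
    exact_mod_cast this
  have h7 : 0 ≤ Real.log 4 := Real.log_nonneg (by norm_num)
  have h8 : 0 ≤ Real.log (2 * n) := Real.log_nonneg (by
    have : (4 : ℝ) ≤ n := by exact_mod_cast hn
    linarith)
  have h9 := mul_le_mul_of_nonneg_right h5 h8
  have h10 := mul_le_mul_of_nonneg_right h6 h7
  nlinarith

/-- For every real `θ` with `0 < θ < log 4 / C − 1` (with `C = 1.25506`),
there exists `n⋆` such that for all `n ≥ n⋆`, the number of primes in
`(n, 2n)` is at least `⌊θ · π(n)⌋`. -/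
theorem stmt_17 (θ : ℝ) (hθ0 : 0 < θ) (hθ : θ < Real.log 4 / 1.25506 - 1) :
    ∃ nstar : ℕ, ∀ n : ℕ, n ≥ nstar →
      ⌊θ * (Nat.primeCounting n : ℝ)⌋ ≤
        (((Finset.Ioo n (2 * n)).filter Nat.Prime).card : ℤ) := by
  have hl4 : Real.log 4 = 2 * Real.log 2 := by
    rw [show (4 : ℝ) = 2 ^ 2 by norm_num, Real.log_pow]; norm_num
  have hu := Real.log_two_lt_d9
  have hl := Real.log_two_gt_d9
  have hθ' : θ < 1 / 8 := by
    refine hθ.trans ?_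
    rw [sub_lt_iff_lt_add, div_lt_iff₀ (by norm_num)]
    linarith
  have e1 := tendsto_natCast_atTop_atTop (R := ℝ) |>.eventually
    (Chebyshev.eventually_primeCounting_le (ε := 0.1) (by norm_num))
  have e2 := tendsto_natCast_atTop_atTop (R := ℝ) |>.eventually
    ((isLittleO_log_rpow_atTop (r := 1 / 2) (by norm_num)).bound
      (show (0 : ℝ) < 0.01 by norm_num))
  obtain ⟨N, hN⟩ := Filter.eventually_atTop.1 (e1.and e2)
  refine ⟨max N 4, fun n hn => ?_⟩
  have hn4 : 4 ≤ n := (le_max_right _ _).trans hn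
  obtain ⟨h1, h2⟩ := hN n ((le_max_left _ _).trans hn)
  have h3 := aux_log n hn4
  set k := ((Finset.Ioo n (2 * n)).filter Nat.Prime).card
  have hx4 : (4 : ℝ) ≤ n := by exact_mod_cast hn4
  rw [Nat.floor_natCast] at h1
  set P : ℝ := (Nat.primeCounting n : ℝ) with hP
  have hP0 : 0 ≤ P := Nat.cast_nonneg _
  set x : ℝ := (n : ℝ)
  have hL : 0 < Real.log x := Real.log_pos (by linarith)
  rw [le_div_iff₀ hL] at h1
  rw [← Real.sqrt_eq_rpow, Real.norm_of_nonneg hL.le,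
    Real.norm_of_nonneg (Real.sqrt_nonneg _)] at h2
  have hs : Real.sqrt x * Real.sqrt x = x := Real.mul_self_sqrt (by linarith)
  have hs1 : 1 ≤ Real.sqrt x := Real.one_le_sqrt.2 (by linarith)
  have hs2 : Real.sqrt (2 * x) ≤ 2 * Real.sqrt x := by
    rw [Real.sqrt_le_left (by positivity)]
    nlinarith
  have hlog : Real.log (2 * x) ≤ 2 * Real.log x := by
    rw [Real.log_mul (by norm_num) (by linarith)]
    have := Real.log_le_log (by norm_num : (0 : ℝ) < 2) (by linarith : (2 : ℝ) ≤ x)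
    linarith
  have hk0 : (0 : ℝ) ≤ k := Nat.cast_nonneg _
  have h5 : (1 + Real.sqrt (2 * x) + (k : ℝ)) * Real.log (2 * x)
      ≤ (3 * Real.sqrt x + k) * (2 * Real.log x) := by
    apply mul_le_mul (by linarith) hlog (Real.log_nonneg (by linarith)) (by positivity)
  have h6 : Real.sqrt x * Real.log x ≤ 0.01 * x := by nlinarith
  have h7 : P * Real.log x ≤ 1.5 * x := by nlinarith
  have h8 : θ * (P * Real.log x) ≤ 1 / 8 * (P * Real.log x) :=
    mul_le_mul_of_nonneg_right hθ'.le (by positivity)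
  have h9 : 0.46 * x ≤ x / 3 * Real.log 4 := by nlinarith
  have h10 : θ * P * Real.log x ≤ k * Real.log x := by nlinarith
  have h11 : θ * P ≤ k := le_of_mul_le_mul_right h10 hL
  have h12 : (⌊θ * P⌋ : ℝ) ≤ ((k : ℤ) : ℝ) := by
    push_cast
    exact (Int.floor_le _).trans h11
  exact_mod_cast h12
end
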